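/- Let p be a point of an open set M ⊆ ℝ³ with coordinates (u¹,u²,u³), and let Ω = (Ω¹,Ω²,Ω³) be an ℝ³-valued 2-form on M whose components Ωⁱ = Σ_{j<k} Ωⁱ_{jk} du^j ∧ du^k have real-analytic coefficient functions Ωⁱ_{jk} = −Ωⁱ_{kj} : M → ℝ. Suppose (closedness) ∂₁Ωⁱ_{23} + ∂₂Ωⁱ_{31} + ∂₃Ωⁱ_{12} = 0 on M for each i, and (nondegeneracy) there is no nonzero vector v ∈ ℝ³ with v ⌟ Ω(p) = 0, i.e., for every v ≠ 0 there exist indices i, k with Σ_j Ωⁱ_{jk}(p) v_j ≠ 0. Then there exist an open neighborhood U ⊆ M of p, a real-analytic map x : U → ℝ³ whose Jacobian matrix Dx(u) is invertible for every u ∈ U, and a real-analytic map a : U → SO(3), such that the matrix-valued function W(u) = a(u)⁻¹ · Dx(u) satisfies ∂_j W_{ik} − ∂_k W_{ij} = Ωⁱ_{jk} on U for all i, j, k. (Equivalently: the 1-forms ωⁱ = Σ_j W_{ij} du^j form a coframing on U with dωⁱ = Ωⁱ, and the metric g = (ω¹)² + (ω²)² + (ω³)², being equal to ᵗdx ∘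 dx, is flat.) -/

import Mathlib

open Matrix

noncomputable section

/-- Partial derivative in the `j`-th coordinate direction. -/
def pd {m : ℕ} {F : Type*} [NormedAddCommGroup F] [NormedSpace ℝ F]
    (j : Fin m) (f : (Fin m → ℝ) → F) (u : Fin m → ℝ) : F :=
  fderiv ℝ f u (Pi.single j 1)

/-- The special orthogonal group SO(3), as a set of 3×3 real matrices. -/
def SO3 : Set (Matrix (Fin 3) (Fin 3) ℝ) :=
  {A | Aᵀ * A = 1 ∧ A.det = 1}

/-- The skew-symmetric matrix `[v]` associated to `v ∈ ℝ³`, with `[v] w = w × v`. -/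
def crossMat (v : Fin 3 → ℝ) : Matrix (Fin 3) (Fin 3) ℝ :=
  !![0, v 2, -(v 1); -(v 2), 0, v 0; v 1, -(v 0), 0]

/-- The Jacobian matrix of a map `x : ℝ³ → ℝ³`. -/
def jacobian (x : (Fin 3 → ℝ) → (Fin 3 → ℝ)) (u : Fin 3 → ℝ) :
    Matrix (Fin 3) (Fin 3) ℝ :=
  Matrix.of fun i j => pd j x u i

/-- `W(u) = a(u)⁻¹ · Dx(u)`, the coefficient matrix of the coframing `ω = a⁻¹ dx`. -/
def Wmat (a : (Fin 3 → ℝ) → Matrix (Fin 3) (Fin 3) ℝ)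
    (x : (Fin 3 → ℝ) → (Fin 3 → ℝ)) (u : Fin 3 → ℝ) : Matrix (Fin 3) (Fin 3) ℝ :=
  (a u)⁻¹ * jacobian x u

/-- The tableau `A_Q`: the span of the matrices `[x] + [y] Q`. -/
def tableau (Q : Matrix (Fin 3) (Fin 3) ℝ) : Submodule ℝ (Matrix (Fin 3) (Fin 3) ℝ) :=
  Submodule.span ℝ {M | ∃ x y : Fin 3 → ℝ, M = crossMat x + crossMat y * Q}

end

/-!
A map `x` and a rotation valued `a` solve the problem when `d(ᵗa a) = 0` and `d(ᵗa dx) = Ω`. Read in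
one coordinate direction `τ` after another, this is a sequence of Cauchy problems: given a solution
of the equations in the directions of `S`, prescribe it on a hyperplane `u τ = const` and solve the
equations involving `τ` and `S` for `∂_τ (a, x)`. They are underdetermined, and they are surjective
in `∂_τ (a, x)` if the coframe at `p` is in general position with respect to `Ω p`, which the
nondegeneracy of `Ω p` allows. Since `d(ᵗa dx)` and `Ω` are both closed, the equations in the
directions of `S` hold off the hyperplane as well.

Each Cauchy problem `B(∂_τ y, j y) = h`, with `j y` the tangential jet, is solved without majorants:
on an `ℓ¹` space of coefficients of power series, for suitable weights, the primitive in `τ` and its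
tangential derivatives are operators of small norm, so the implicit function theorem for analytic
maps of Banach spaces applies.
-/

open Filter Topology Set
open scoped lp ENNReal

noncomputable section

section EllOne

variable {I V E : Type*} [DecidableEq I] [NormedAddCommGroup V] [NormedSpace ℝ V]
  [NormedAddCommGroup E] [NormedSpace ℝ E]

theorem ellOne_ext {S T : ℓ¹(I, V) →L[ℝ] E}
    (h : ∀ i v, S (lp.single 1 i v) = T (lp.single 1 i v)) : S = T :=
  lp.ext_continuousLinearMap ENNReal.one_ne_top fun i => ContinuousLinearMap.ext fun v => h i v

theorem opNorm_le_of_single {T : ℓ¹(I, V) →L[ℝ] E} {C : ℝ} (hC : 0 ≤ C)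
    (h : ∀ i v, ‖T (lp.single 1 i v)‖ ≤ C * ‖v‖) : ‖T‖ ≤ C := by
  refine T.opNorm_le_bound hC fun f => ?_
  have hf := (lp.hasSum_single ENNReal.one_ne_top f).map T T.continuous
  have hnorm : HasSum (fun i => C * ‖f i‖) (C * ‖f‖) := by
    simpa using (lp.hasSum_norm (p := 1) (by simp) f).mul_left C
  exact hf.norm_le_of_bounded hnorm fun i => h i (f i)

variable [CompleteSpace E]

open Classical in
/-- The operator on `ℓ¹` determined by a bounded family of operators on the coordinates; it is `0`
when the family is unbounded. -/
def ellOneLift (T : I → V →L[ℝ] E) : ℓ¹(I, V) →L[ℝ] E :=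
  if h : Memℓp T ∞ then
    lp.dualPairing ∞ 1 (fun _ => .id ℝ (V →L[ℝ] E)) (K := 1)
      (fun _ => by simpa using ContinuousLinearMap.norm_id_le) ⟨T, h⟩
  else 0

theorem ellOneLift_single {T : I → V →L[ℝ] E} {C : ℝ} (hC : ∀ i, ‖T i‖ ≤ C) (i : I) (v : V) :
    ellOneLift T (lp.single 1 i v) = T i v := by
  have hT : Memℓp T ∞ := memℓp_infty ⟨C, by rintro _ ⟨i, rfl⟩; exact hC i⟩
  rw [ellOneLift, dif_pos hT]
  refine (lp.dualPairing_apply ..).trans <| (tsum_eq_single i fun k hk => ?_).trans ?_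
  · rw [lp.single_apply_ne _ _ _ hk, map_zero]
  · rw [lp.single_apply_self]; rfl

omit [DecidableEq I] in
theorem norm_ellOneLift_le {T : I → V →L[ℝ] E} {C : ℝ} (hC₀ : 0 ≤ C) (hC : ∀ i, ‖T i‖ ≤ C) :
    ‖ellOneLift T‖ ≤ C := by
  classical
  refine opNorm_le_of_single hC₀ fun i v => ?_
  rw [ellOneLift_single hC]
  exact (T i).le_of_opNorm_le (hC i) v

end EllOne

section WeightedShift

variable {I J V V' : Type*} [DecidableEq J]
  [NormedAddCommGroup V] [NormedSpace ℝ V] [NormedAddCommGroup V'] [NormedSpace ℝ V']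
  {c : I → ℝ} {C : ℝ}

theorem norm_smul_single_comp_le (hc : ∀ i, |c i| ≤ C) (φ : I → J) (L : V →L[ℝ] V') (i : I) :
    ‖c i • (lp.singleContinuousLinearMap ℝ (fun _ : J => V') 1 (φ i) ∘L L)‖ ≤ C * ‖L‖ := by
  have hC : 0 ≤ C := (abs_nonneg _).trans (hc i)
  refine ContinuousLinearMap.opNorm_le_bound _ (by positivity) fun v => ?_
  simp only [_root_.smul_apply, ContinuousLinearMap.comp_apply,
    lp.singleContinuousLinearMap_apply, norm_smul, Real.norm_eq_abs]
  rw [lp.norm_single one_pos, mul_assoc]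
  exact mul_le_mul (hc i) (L.le_opNorm v) (norm_nonneg _) hC

variable [CompleteSpace V'] [DecidableEq I]

/-- The weighted shift `e_i ⊗ v ↦ c i • e_{φ i} ⊗ L v` between `ℓ¹` spaces. -/
def weightedShift (c : I → ℝ) (φ : I → J) (L : V →L[ℝ] V') : ℓ¹(I, V) →L[ℝ] ℓ¹(J, V') :=
  ellOneLift fun i => c i • (lp.singleContinuousLinearMap ℝ (fun _ : J => V') 1 (φ i) ∘L L)

theorem weightedShift_single (hc : ∀ i, |c i| ≤ C) (φ : I → J) (L : V →L[ℝ] V') (i : I) (v : V) :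
    weightedShift c φ L (lp.single 1 i v) = lp.single 1 (φ i) (c i • L v) := by
  rw [weightedShift, ellOneLift_single (norm_smul_single_comp_le hc φ L)]
  simp [lp.single_smul]

omit [DecidableEq I] in
theorem norm_weightedShift_le (hC : 0 ≤ C) (hc : ∀ i, |c i| ≤ C) (φ : I → J) (L : V →L[ℝ] V') :
    ‖weightedShift c φ L‖ ≤ C * ‖L‖ :=
  norm_ellOneLift_le (by positivity) (norm_smul_single_comp_le hc φ L)

/-- `weightedShift` as a bounded linear function of the operator on the coordinates. -/
def weightedShiftL (c : I → ℝ) (φ : I → J) (hC : 0 ≤ C) (hc : ∀ i, |c i| ≤ C) :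
    (V →L[ℝ] V') →L[ℝ] ℓ¹(I, V) →L[ℝ] ℓ¹(J, V') :=
  LinearMap.mkContinuous
    { toFun := weightedShift c φ
      map_add' := fun L L' => ellOne_ext fun i v => by
        simp [weightedShift_single hc, lp.single_add]
      map_smul' := fun a L => ellOne_ext fun i v => by
        simp [weightedShift_single hc, lp.single_smul, smul_comm a] }
    C (norm_weightedShift_le hC hc φ)

/-- The operator `L` acting coordinatewise on `ℓ¹`. -/
def ellOneMap (I : Type*) [DecidableEq I] (L : V →L[ℝ] V') : ℓ¹(I, V) →L[ℝ] ℓ¹(I, V') :=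
  weightedShift (fun _ => 1) id L

theorem ellOneMap_single (L : V →L[ℝ] V') (i : I) (v : V) :
    ellOneMap I L (lp.single 1 i v) = lp.single 1 i (L v) := by
  rw [ellOneMap, weightedShift_single (C := 1) (by simp)]
  simp

end WeightedShift

/-- Exponents of monomials in `m` variables. -/
abbrev MultiIndex (m : ℕ) : Type := Fin m → ℕ

namespace MultiIndex

variable {m : ℕ}

/-- The total degree `|α|`. -/
def deg (α : MultiIndex m) : ℕ := ∑ i, α i

/-- The monomial `v ^ α`. -/
def monomial (α : MultiIndex m) (v : Fin m → ℝ) : ℝ := ∏ i, v i ^ α i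

/-- The exponent of the `j`-th variable. -/
abbrev single (j : Fin m) : MultiIndex m := Pi.single j 1

theorem deg_zero : deg (0 : MultiIndex m) = 0 := by simp [deg]

theorem deg_add (α β : MultiIndex m) : deg (α + β) = deg α + deg β := Finset.sum_add_distrib

theorem deg_single (j : Fin m) : deg (single j) = 1 := by simp [deg]

theorem deg_eq_zero {α : MultiIndex m} : deg α = 0 ↔ α = 0 := by
  simp [deg, funext_iff]

theorem apply_le_deg (α : MultiIndex m) (j : Fin m) : α j ≤ deg α :=
  Finset.single_le_sum (fun _ _ => Nat.zero_le _) (Finset.mem_univ j)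

theorem apply_add_apply_le_deg (α : MultiIndex m) {i j : Fin m} (h : i ≠ j) :
    α i + α j ≤ deg α := by
  rw [← Finset.sum_pair h]
  exact Finset.sum_le_sum_of_subset (Finset.subset_univ _)

theorem exists_eq_add_single {α : MultiIndex m} {j : Fin m} (h : α j ≠ 0) :
    ∃ β, α = β + single j :=
  ⟨α - single j, (tsub_add_cancel_of_le fun i => by
    obtain rfl | hi := eq_or_ne i j
    · simpa using Nat.one_le_iff_ne_zero.2 h
    · simp [hi]).symm⟩

theorem monomial_add (α β : MultiIndex m) (v : Fin m → ℝ) :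
    monomial (α + β) v = monomial α v * monomial β v := by
  simp [monomial, pow_add, Finset.prod_mul_distrib]

theorem monomial_single (j : Fin m) (v : Fin m → ℝ) : monomial (single j) v = v j := by
  rw [monomial, Finset.prod_eq_single j] <;> simp +contextual

theorem monomial_zero (v : Fin m → ℝ) : monomial 0 v = 1 := by simp [monomial]

theorem monomial_zero_right {α : MultiIndex m} (h : α ≠ 0) : monomial α (0 : Fin m → ℝ) = 0 := by
  obtain ⟨j, hj⟩ := Function.ne_iff.1 h
  exact Finset.prod_eq_zero (Finset.mem_univ j) (zero_pow hj)

theorem monomial_smul (α : MultiIndex m) (c : ℝ) (v : Fin m → ℝ) :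
    monomial α (c • v) = c ^ deg α * monomial α v := by
  simp [monomial, deg, mul_pow, Finset.prod_mul_distrib, Finset.prod_pow_eq_pow_sum]

theorem abs_monomial_le (α : MultiIndex m) (v : Fin m → ℝ) : |monomial α v| ≤ ‖v‖ ^ deg α := by
  rw [monomial, Finset.abs_prod, deg, ← Finset.prod_pow_eq_pow_sum]
  gcongr with i
  rw [abs_pow]
  exact pow_le_pow_left₀ (abs_nonneg _) (norm_le_pi_norm v i) _

theorem hasFDerivAt_monomial (α : MultiIndex m) (v : Fin m → ℝ) :
    HasFDerivAt (monomial α)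
      (∑ i, (∏ k ∈ Finset.univ.erase i, v k ^ α k) •
        ((α i * v i ^ (α i - 1)) • (ContinuousLinearMap.proj i : (Fin m → ℝ) →L[ℝ] ℝ))) v :=
  HasFDerivAt.finsetProd fun i _ => by
    simpa [mul_comm] using HasFDerivAt.pow (hasFDerivAt_apply (𝕜 := ℝ) i v) (α i)

theorem pd_monomial (α : MultiIndex m) (j : Fin m) (v : Fin m → ℝ) :
    pd j (monomial α) v = α j * monomial (α - single j) v := by
  have herase : ∏ k ∈ Finset.univ.erase j, v k ^ (α - single j) k
      = ∏ k ∈ Finset.univ.erase j, v k ^ α k :=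
    Finset.prod_congr rfl fun k hk => by simp [Finset.ne_of_mem_erase hk]
  rw [pd, (hasFDerivAt_monomial α v).fderiv, monomial,
    ← Finset.mul_prod_erase _ _ (Finset.mem_univ j), herase, _root_.sum_apply,
    Finset.sum_eq_single j _ (by simp)]
  · simp; ring
  · intro i _ hi; simp [hi]

end MultiIndex

open MultiIndex

section WeightedEval

variable {m : ℕ} {V : Type*} [NormedAddCommGroup V] [NormedSpace ℝ V] [CompleteSpace V]

/-- The sum at `v` of the power series `∑ α, v ^ α / w α • b α` with coefficients `b` in `ℓ¹`. -/
def weightedEval (w : MultiIndex m → ℝ) (v : Fin m → ℝ) : ℓ¹(MultiIndex m, V) →L[ℝ] V :=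
  ellOneLift fun α => (monomial α v / w α) • .id ℝ V

variable {w : MultiIndex m → ℝ} {r : ℝ} {v : Fin m → ℝ}

theorem weightedEval_single (hw : ∀ α, r ^ deg α ≤ w α) (hv : v ∈ Metric.ball 0 r)
    (α : MultiIndex m) (x : V) :
    weightedEval w v (lp.single 1 α x) = (monomial α v / w α) • x := by
  rw [mem_ball_zero_iff] at hv
  have hr : 0 < r := (norm_nonneg v).trans_lt hv
  have hbound (β : MultiIndex m) : ‖(monomial β v / w β) • ContinuousLinearMap.id ℝ V‖ ≤ 1 := by
    have hwβ : 0 < w β := (pow_pos hr _).trans_le (hw β)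
    have hβ : |monomial β v / w β| ≤ 1 := by
      rw [abs_div, abs_of_pos hwβ, div_le_one hwβ]
      exact ((abs_monomial_le β v).trans (by gcongr)).trans (hw β)
    rw [norm_smul]
    exact mul_le_one₀ hβ (norm_nonneg _) ContinuousLinearMap.norm_id_le
  rw [weightedEval, ellOneLift_single hbound]
  rfl

variable (V) in
/-- The operator `∑ j, v j • S j`, where `S j` shifts `e_α` to `(α j / |α|) • e_(α - e_j)`. -/
def backwardShift (v : Fin m → ℝ) : ℓ¹(MultiIndex m, V) →L[ℝ] ℓ¹(MultiIndex m, V) :=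
  ∑ j, v j • weightedShift (fun α => α j / deg α) (fun α => α - single j) (.id ℝ V)

theorem backwardShift_single (v : Fin m → ℝ) (α : MultiIndex m) (x : V) :
    backwardShift V v (lp.single 1 α x) =
      ∑ j, lp.single 1 (α - single j) ((v j * (α j / deg α)) • x) := by
  have hc (j : Fin m) (β : MultiIndex m) : |(β j / deg β : ℝ)| ≤ 1 := by
    rw [abs_of_nonneg (by positivity)]
    exact div_le_one_of_le₀ (by exact_mod_cast apply_le_deg β j) (by positivity)
  simp [backwardShift, weightedShift_single (hc _), mul_smul, lp.single_smul]

theorem norm_backwardShift_le (v : Fin m → ℝ) : ‖backwardShift V v‖ ≤ ‖v‖ := by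
  refine opNorm_le_of_single (norm_nonneg v) fun α x => ?_
  have hsum : ∑ j, (α j / deg α : ℝ) ≤ 1 := by
    rw [← Finset.sum_div, ← Nat.cast_sum]
    exact div_self_le_one _
  rw [backwardShift_single]
  calc ‖∑ j, (lp.single 1 (α - single j) ((v j * (α j / deg α)) • x) : ℓ¹(MultiIndex m, V))‖
      ≤ ∑ j, ‖v‖ * (α j / deg α) * ‖x‖ := norm_sum_le_of_le _ fun j _ => by
        rw [lp.norm_single one_pos, norm_smul, norm_mul,
          Real.norm_of_nonneg (r := (α j / deg α : ℝ)) (by positivity)]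
        gcongr
        exact norm_le_pi_norm v j
    _ = ‖v‖ * (∑ j, (α j / deg α : ℝ)) * ‖x‖ := by rw [Finset.mul_sum, Finset.sum_mul]
    _ ≤ ‖v‖ * ‖x‖ := by
        gcongr
        exact mul_le_of_le_one_right (norm_nonneg v) hsum

/-- Euler's relation for homogeneous polynomials, read on the coefficient side. -/
theorem weightedEval_one_comp_one_sub_backwardShift (hv : v ∈ Metric.ball 0 1) :
    weightedEval 1 v ∘L (1 - backwardShift V v) = weightedEval 1 0 := by
  have hw (α : MultiIndex m) : (1 : ℝ) ^ deg α ≤ (1 : MultiIndex m → ℝ) α := by simp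
  refine ellOne_ext fun α x => ?_
  have hstep (j : Fin m) : monomial (α - single j) v * (v j * (α j / deg α)) =
      monomial α v * (α j / deg α) := by
    obtain h | h := eq_or_ne (α j) 0
    · simp [h]
    · obtain ⟨β, rfl⟩ := exists_eq_add_single h
      rw [add_tsub_cancel_right, monomial_add, monomial_single]
      ring
  have hsum : weightedEval 1 v (backwardShift V v (lp.single 1 α x)) =
      (monomial α v * (∑ j, (α j : ℝ) / deg α)) • x := by
    simp only [backwardShift_single, map_sum, weightedEval_single hw hv, smul_smul, Pi.one_apply,
      div_one, hstep, ← Finset.sum_smul, ← Finset.mul_sum]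
  simp only [ContinuousLinearMap.comp_apply, _root_.sub_apply, one_apply_eq_self,
    map_sub, hsum, weightedEval_single hw hv,
    weightedEval_single hw (Metric.mem_ball_self one_pos), Pi.one_apply, div_one, ← sub_smul]
  obtain rfl | hα := eq_or_ne α 0
  · simp [monomial_zero]
  · have : (deg α : ℝ) ≠ 0 := Nat.cast_ne_zero.2 (deg_eq_zero.not.2 hα)
    rw [monomial_zero_right hα, ← Finset.sum_div, ← Nat.cast_sum, ← deg, div_self this]
    simp

theorem weightedEval_one_eq (hv : v ∈ Metric.ball 0 1) :
    (weightedEval 1 v : ℓ¹(MultiIndex m, V) →L[ℝ] V) =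
      weightedEval 1 0 ∘L Ring.inverse (1 - backwardShift V v) := by
  have hunit : IsUnit (1 - backwardShift V v) := isUnit_one_sub_of_norm_lt_one <|
    (norm_backwardShift_le v).trans_lt (mem_ball_zero_iff.1 hv)
  rw [← weightedEval_one_comp_one_sub_backwardShift hv, ContinuousLinearMap.comp_assoc,
    ← ContinuousLinearMap.mul_def, Ring.mul_inverse_cancel _ hunit]
  rfl

theorem weightedEval_eq_weightedEval_one_comp (hw : ∀ α, r ^ deg α ≤ w α)
    (hv : v ∈ Metric.ball 0 r) :
    (weightedEval w v : ℓ¹(MultiIndex m, V) →L[ℝ] V) =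
      weightedEval 1 (r⁻¹ • v) ∘L weightedShift (fun α => r ^ deg α / w α) id (.id ℝ V) := by
  have hr : 0 < r := Metric.pos_of_mem_ball hv
  have hwpos (α : MultiIndex m) : 0 < w α := (pow_pos hr _).trans_le (hw α)
  have hc (α : MultiIndex m) : |r ^ deg α / w α| ≤ 1 := by
    rw [abs_of_nonneg (div_nonneg (by positivity) (hwpos α).le)]
    exact div_le_one_of_le₀ (hw α) (hwpos α).le
  have hv' : r⁻¹ • v ∈ Metric.ball 0 1 := by
    rw [mem_ball_zero_iff, norm_smul, Real.norm_of_nonneg (by positivity), inv_mul_lt_one₀ hr]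
    exact mem_ball_zero_iff.1 hv
  refine ellOne_ext fun α x => ?_
  rw [weightedEval_single hw hv, ContinuousLinearMap.comp_apply, weightedShift_single hc,
    weightedEval_single (fun α => by simp) hv', smul_smul, monomial_smul, Pi.one_apply, id, inv_pow]
  congr 1
  field_simp

theorem analyticOnNhd_weightedEval (hw : ∀ α, r ^ deg α ≤ w α) :
    AnalyticOnNhd ℝ (weightedEval w : (Fin m → ℝ) → ℓ¹(MultiIndex m, V) →L[ℝ] V)
      (Metric.ball 0 r) := by
  intro v hv
  have hr : 0 < r := Metric.pos_of_mem_ball hv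
  have hball : ∀ u ∈ Metric.ball (0 : Fin m → ℝ) r, r⁻¹ • u ∈ Metric.ball 0 1 := fun u hu => by
    rw [mem_ball_zero_iff, norm_smul, Real.norm_of_nonneg (by positivity), inv_mul_lt_one₀ hr]
    exact mem_ball_zero_iff.1 hu
  have hshift : AnalyticAt ℝ (fun u : Fin m → ℝ => 1 - backwardShift V (r⁻¹ • u)) v := by
    refine analyticAt_const.sub <| Finset.analyticAt_fun_sum _ fun j _ => ?_
    exact (analyticAt_const.mul
      ((ContinuousLinearMap.proj (R := ℝ) (φ := fun _ : Fin m => ℝ) j).analyticAt v)).smul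
      analyticAt_const
  have hunit : IsUnit (1 - backwardShift V (r⁻¹ • v)) := isUnit_one_sub_of_norm_lt_one <|
    (norm_backwardShift_le _).trans_lt (mem_ball_zero_iff.1 (hball v hv))
  have hinv : AnalyticAt ℝ (fun u => Ring.inverse (1 - backwardShift V (r⁻¹ • u))) v := by
    obtain ⟨T, hT⟩ := hunit
    have hinverse := analyticAt_inverse (𝕜 := ℝ) T
    rw [hT] at hinverse
    exact AnalyticAt.fun_comp (f := fun u => 1 - backwardShift V (r⁻¹ • u)) hinverse hshift
  have hcomp := ((((ContinuousLinearMap.compL ℝ _ _ V).flip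
    (weightedShift (fun α => r ^ deg α / w α) id (.id ℝ V))).comp
    (ContinuousLinearMap.compL ℝ _ _ V (weightedEval 1 0))).analyticAt _).fun_comp hinv
  refine hcomp.congr ?_
  filter_upwards [Metric.isOpen_ball.mem_nhds hv] with u hu
  simp only [ContinuousLinearMap.comp_apply, ContinuousLinearMap.compL_apply,
    ContinuousLinearMap.flip_apply]
  rw [weightedEval_eq_weightedEval_one_comp hw hu, weightedEval_one_eq (hball u hu)]

end WeightedEval

section PartialDerivatives

variable {m : ℕ} {E F : Type*} [NormedAddCommGroup E] [NormedSpace ℝ E]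
  [NormedAddCommGroup F] [NormedSpace ℝ F] {j : Fin m} {u : Fin m → ℝ}

theorem pd_congr {f g : (Fin m → ℝ) → F} (h : f =ᶠ[𝓝 u] g) : pd j f u = pd j g u := by
  rw [pd, pd, h.fderiv_eq]

theorem pd_comp_sub (f : (Fin m → ℝ) → F) (p : Fin m → ℝ) :
    pd j (fun v => f (v - p)) u = pd j f (u - p) := by
  rw [pd, pd, fderiv_comp_sub]

theorem pd_clm (L : E →L[ℝ] F) {f : (Fin m → ℝ) → E} (hf : DifferentiableAt ℝ f u) :
    pd j (fun v => L (f v)) u = L (pd j f u) := by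
  exact congr($((L.hasFDerivAt.comp u hf.hasFDerivAt).fderiv) _)

theorem pd_clm_apply {T : (Fin m → ℝ) → E →L[ℝ] F} (hT : DifferentiableAt ℝ T u) (x : E) :
    pd j (fun v => T v x) u = pd j T u x :=
  pd_clm (ContinuousLinearMap.apply ℝ F x) hT

theorem pd_weightedEval_single [CompleteSpace E] {w : MultiIndex m → ℝ} {r : ℝ}
    (hw : ∀ α, r ^ deg α ≤ w α) (hu : u ∈ Metric.ball 0 r) (α : MultiIndex m) (x : E) :
    pd j (weightedEval w) u (lp.single 1 α x) = (α j * monomial (α - single j) u / w α) • x := by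
  have hmon : DifferentiableAt ℝ (monomial α) u := (hasFDerivAt_monomial α u).differentiableAt
  have hline : (fun v => weightedEval w v (lp.single 1 α x)) =ᶠ[𝓝 u]
      fun v => (ContinuousLinearMap.id ℝ ℝ).smulRight ((w α)⁻¹ • x) (monomial α v) := by
    filter_upwards [Metric.isOpen_ball.mem_nhds hu] with v hv
    simp [weightedEval_single hw hv, smul_smul, div_eq_mul_inv]
  rw [← pd_clm_apply (analyticOnNhd_weightedEval hw u hu).differentiableAt, pd_congr hline,
    pd_clm _ hmon, pd_monomial]
  simp [smul_smul, div_eq_mul_inv]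

end PartialDerivatives

section PowerSeries

variable {m : ℕ} {V : Type*} [NormedAddCommGroup V] [NormedSpace ℝ V] {n : ℕ}

theorem deg_sum_single (κ : Fin n → Fin m) : deg (∑ i, single (κ i)) = n := by
  simp only [deg, Finset.sum_apply]
  rw [Finset.sum_comm]
  simp

theorem monomial_sum_single (κ : Fin n → Fin m) (v : Fin m → ℝ) :
    monomial (∑ i, single (κ i)) v = ∏ i, v (κ i) := by
  simp only [monomial, Finset.sum_apply, ← Finset.prod_pow_eq_pow_sum]
  rw [Finset.prod_comm]
  exact Finset.prod_congr rfl fun i _ => monomial_single (κ i) v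

theorem multilinear_diagonal_eq_sum (c : (Fin m → ℝ) [×n]→L[ℝ] V) (v : Fin m → ℝ) :
    c (fun _ => v) = ∑ κ : Fin n → Fin m,
      monomial (∑ i, single (κ i)) v • c fun i => Pi.single (κ i) 1 := by
  have hv : v = ∑ j, v j • Pi.single j (1 : ℝ) := by
    simpa [← Pi.single_smul] using (LinearMap.sum_single_apply (fun _ => ℝ) v).symm
  conv_lhs => rw [hv]
  rw [c.map_sum]
  refine Finset.sum_congr rfl fun κ _ => ?_
  rw [c.map_smul_univ fun i => v (κ i), monomial_sum_single]

theorem norm_multilinear_single_le (c : (Fin m → ℝ) [×n]→L[ℝ] V) (κ : Fin n → Fin m) :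
    ‖c fun i => Pi.single (κ i) 1‖ ≤ ‖c‖ :=
  (c.le_opNorm _).trans_eq (by simp [Pi.norm_single])

variable [CompleteSpace V]

theorem summable_words (c : ∀ n, (Fin m → ℝ) [×n]→L[ℝ] V) {r : ℝ} (hr : 0 ≤ r)
    (hc : Summable fun n => ‖c n‖ * (m * r) ^ n) :
    Summable fun κ : Σ n, Fin n → Fin m =>
      (lp.single 1 (∑ i, single (κ.2 i)) (r ^ κ.1 • c κ.1 fun i => Pi.single (κ.2 i) 1) :
        ℓ¹(MultiIndex m, V)) := by
  have hword (κ : Σ n, Fin n → Fin m) :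
      ‖(lp.single 1 (∑ i, single (κ.2 i)) (r ^ κ.1 • c κ.1 fun i => Pi.single (κ.2 i) 1) :
        ℓ¹(MultiIndex m, V))‖ ≤ r ^ κ.1 * ‖c κ.1‖ := by
    rw [lp.norm_single one_pos, norm_smul, Real.norm_of_nonneg (by positivity)]
    gcongr
    exact norm_multilinear_single_le (c κ.1) κ.2
  refine .of_norm_bounded ((summable_sigma_of_nonneg fun κ => by positivity).2
    ⟨fun n => (hasSum_fintype _).summable, ?_⟩) hword
  refine hc.congr fun n => ?_
  calc ‖c n‖ * (m * r) ^ n = ∑ _κ : Fin n → Fin m, r ^ n * ‖c n‖ := by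
        simp only [Finset.sum_const, Finset.card_univ, Fintype.card_pi_const, nsmul_eq_mul,
          mul_pow, Nat.cast_pow, Fintype.card_fin]
        ring
    _ = ∑' _κ : Fin n → Fin m, r ^ n * ‖c n‖ := (tsum_fintype _).symm

theorem exists_eq_weightedEval {f : (Fin m → ℝ) → V} {p : Fin m → ℝ} (hf : AnalyticAt ℝ f p) :
    ∃ r > 0, ∃ b : ℓ¹(MultiIndex m, V),
      ∀ᶠ u in 𝓝 p, f u = weightedEval (fun α => r ^ deg α) (u - p) b := by
  obtain ⟨c, R, hc⟩ := hf
  obtain ⟨s, hs₀, hsR⟩ := ENNReal.lt_iff_exists_nnreal_btwn.1 hc.r_pos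
  have hs : (0 : ℝ) < s := NNReal.coe_pos.2 (ENNReal.coe_pos.1 hs₀)
  set r : ℝ := s / (m + 1) with hr_def
  have hr : 0 < r := by positivity
  have hmr : m * r ≤ s := by
    rw [hr_def, mul_div_assoc', div_le_iff₀ (by positivity)]
    nlinarith
  have hsum := (summable_words c hr.le <| .of_nonneg_of_le (fun n => by positivity)
    (fun n => by gcongr) (c.summable_norm_mul_pow (hsR.trans_le hc.r_le))).hasSum
  refine ⟨r, hr, ∑' κ : Σ n, Fin n → Fin m, lp.single 1 (∑ i, single (κ.2 i))
    (r ^ κ.1 • c κ.1 fun i => Pi.single (κ.2 i) 1), ?_⟩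
  filter_upwards [Metric.ball_mem_nhds p hr, Metric.eball_mem_nhds p hc.r_pos] with u hu hu'
  have hball : u - p ∈ Metric.ball 0 r := by simpa [dist_eq_norm] using hu
  refine (hc.hasSum_sub hu').unique <| (hsum.map (weightedEval (fun α => r ^ deg α) (u - p))
    (ContinuousLinearMap.continuous _)).sigma fun n => ?_
  rw [multilinear_diagonal_eq_sum (c n)]
  convert hasSum_fintype _ using 2 with κ
  rw [Function.comp_apply, weightedEval_single (fun α => le_rfl) hball, deg_sum_single, smul_smul,
    div_mul_cancel₀ _ (by positivity)]

end PowerSeries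

section KovalevskayaWeight

variable {m : ℕ}

/-- The weight `l ^ (|α| + α τ) / (|α|.choose (α τ))`. As `l → 0` the direction `τ` is
compressed more strongly than the others, which makes `τ`-integration small even after a
tangential derivative; the binomial coefficient keeps products bounded. -/
def kovWeight (τ : Fin m) (l : ℝ) (α : MultiIndex m) : ℝ :=
  l ^ (deg α + α τ) / (deg α).choose (α τ)

variable {τ : Fin m} {l : ℝ}

theorem choose_deg_pos (τ : Fin m) (α : MultiIndex m) : 0 < (deg α).choose (α τ) :=
  Nat.choose_pos (apply_le_deg α τ)

theorem pow_deg_le_kovWeight (hl : 0 < l) (hl' : l ≤ 1) (α : MultiIndex m) :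
    (l ^ 2 / 2) ^ deg α ≤ kovWeight τ l α := by
  rw [kovWeight, div_pow, ← pow_mul]
  have hchoose : ((deg α).choose (α τ) : ℝ) ≤ 2 ^ deg α := by
    exact_mod_cast Nat.choose_le_two_pow _ _
  have hpow : l ^ (2 * deg α) ≤ l ^ (deg α + α τ) :=
    pow_le_pow_of_le_one hl.le hl' (by have := apply_le_deg α τ; lia)
  have : (0 : ℝ) < (deg α).choose (α τ) := by exact_mod_cast choose_deg_pos τ α
  gcongr

theorem kovWeight_zero : kovWeight τ l 0 = 1 := by simp [kovWeight, deg_zero]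

/-- The factor relating the product of two normalized monomials to their normalized product. -/
def chooseRatio (τ : Fin m) (α β : MultiIndex m) : ℝ :=
  (deg α).choose (α τ) * (deg β).choose (β τ) / (deg (α + β)).choose ((α + β) τ)

theorem abs_chooseRatio_le_one (τ : Fin m) (α β : MultiIndex m) : |chooseRatio τ α β| ≤ 1 := by
  have h : (deg α).choose (α τ) * (deg β).choose (β τ) ≤ (deg (α + β)).choose ((α + β) τ) := by
    rw [deg_add, Pi.add_apply, Nat.add_choose_eq]
    exact Finset.single_le_sum (f := fun k : ℕ × ℕ => (deg α).choose k.1 * (deg β).choose k.2)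
      (fun _ _ => Nat.zero_le _) (a := (α τ, β τ)) (by simp)
  rw [chooseRatio, abs_of_nonneg (by positivity)]
  exact div_le_one_of_le₀ (by exact_mod_cast h) (by positivity)

theorem chooseRatio_zero_right (α : MultiIndex m) : chooseRatio τ α 0 = 1 := by
  have := (choose_deg_pos τ α).ne'
  rw [chooseRatio, add_zero, deg_zero, Pi.zero_apply, Nat.choose_self, Nat.cast_one, mul_one]
  exact div_self (Nat.cast_ne_zero.2 this)

theorem chooseRatio_mul_monomial_div_kovWeight (hl : l ≠ 0) (α β : MultiIndex m)
    (v : Fin m → ℝ) :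
    chooseRatio τ α β * (monomial (α + β) v / kovWeight τ l (α + β)) =
      monomial α v / kovWeight τ l α * (monomial β v / kovWeight τ l β) := by
  have hα := (choose_deg_pos τ α).ne'
  have hβ := (choose_deg_pos τ β).ne'
  have hαβ := (choose_deg_pos τ (α + β)).ne'
  rw [monomial_add]
  simp only [chooseRatio, kovWeight, deg_add, Pi.add_apply] at hαβ ⊢
  field_simp
  ring

theorem div_kovWeight_add_single_self (hl : l ≠ 0) (α : MultiIndex m) :
    l ^ 2 / (deg α + 1) * (α τ + 1) / kovWeight τ l (α + single τ) = 1 / kovWeight τ l α := by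
  have hα := (choose_deg_pos τ α).ne'
  have hα' := (choose_deg_pos τ (α + single τ)).ne'
  simp only [kovWeight, deg_add, deg_single, Pi.add_apply, Pi.single_eq_same] at hα' ⊢
  have hchoose : (deg α + 1 : ℝ) * (deg α).choose (α τ) =
      (deg α + 1).choose (α τ + 1) * (α τ + 1) := by
    exact_mod_cast Nat.add_one_mul_choose_eq (deg α) (α τ)
  field_simp [hα]
  linear_combination -(l ^ (deg α + α τ + 2)) * hchoose

theorem div_kovWeight_add_single_of_ne {j : Fin m} (hj : j ≠ τ) (hl : l ≠ 0) (α : MultiIndex m) :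
    l ^ 2 / (deg (α + single j) + 1) / kovWeight τ l (α + single j + single τ) =
      l / (deg (α + single j) - (α + single j) τ) / kovWeight τ l (α + single τ) := by
  have hα := (choose_deg_pos τ (α + single j + single τ)).ne'
  have hα' := (choose_deg_pos τ (α + single τ)).ne'
  have hle := apply_le_deg α τ
  simp only [kovWeight, deg_add, deg_single, Pi.add_apply, Pi.single_eq_same,
    Pi.single_eq_of_ne' hj, add_zero] at hα hα' ⊢
  have hchoose : ((deg α + 1).choose (α τ + 1) : ℝ) * (deg α + 1 + 1) =
      (deg α + 1 + 1).choose (α τ + 1) * (deg α + 1 - α τ) := by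
    have h := Nat.choose_mul_succ_eq (deg α + 1) (α τ + 1)
    rw [show deg α + 1 + 1 - (α τ + 1) = deg α + 1 - α τ by lia] at h
    rw [← Nat.cast_add_one, ← Nat.cast_add_one, ← Nat.cast_sub (by lia)]
    exact_mod_cast h
  have hpos : (deg α + 1 - α τ : ℝ) ≠ 0 := by
    have : (α τ : ℝ) ≤ deg α := by exact_mod_cast hle
    linarith
  push_cast
  field_simp
  linear_combination -(l ^ (deg α + α τ + 3)) * hchoose

end KovalevskayaWeight

section KovalevskayaOperators

variable {m : ℕ} {V V' W : Type*} [NormedAddCommGroup V] [NormedSpace ℝ V]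
  [NormedAddCommGroup V'] [NormedSpace ℝ V'] [NormedAddCommGroup W] [NormedSpace ℝ W]
  [CompleteSpace W] {τ : Fin m} {l : ℝ}

/-- The bilinear map `B` acting on power series normalized by `kovWeight τ l` (for any `l`). -/
def kovMul (τ : Fin m) (B : V →L[ℝ] V' →L[ℝ] W) :
    ℓ¹(MultiIndex m, V) →L[ℝ] ℓ¹(MultiIndex m, V') →L[ℝ] ℓ¹(MultiIndex m, W) :=
  ellOneLift fun α => weightedShiftL (chooseRatio τ α) (fun β => α + β) zero_le_one
    (abs_chooseRatio_le_one τ α) ∘L B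

theorem kovMul_single_single (B : V →L[ℝ] V' →L[ℝ] W) (α β : MultiIndex m) (x : V) (y : V') :
    kovMul τ B (lp.single 1 α x) (lp.single 1 β y) =
      lp.single 1 (α + β) (chooseRatio τ α β • B x y) := by
  have hbound (α : MultiIndex m) : ‖(weightedShiftL (chooseRatio τ α) (fun β => α + β) zero_le_one
      (abs_chooseRatio_le_one τ α) : (V' →L[ℝ] W) →L[ℝ] _) ∘L B‖ ≤ 1 * ‖B‖ :=
    (ContinuousLinearMap.opNorm_comp_le _ B).trans <| by
      gcongr
      exact LinearMap.mkContinuous_norm_le _ zero_le_one _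
  rw [kovMul, ellOneLift_single hbound]
  exact weightedShift_single (abs_chooseRatio_le_one τ α) _ (B x) β y

theorem kovMul_single_zero_right (B : V →L[ℝ] V' →L[ℝ] W) (b : ℓ¹(MultiIndex m, V)) (y : V') :
    kovMul τ B b (lp.single 1 0 y) = ellOneMap _ (B.flip y) b := by
  have h : (kovMul τ B).flip (lp.single 1 0 y) = ellOneMap _ (B.flip y) :=
    ellOne_ext fun α x => by
      rw [ContinuousLinearMap.flip_apply, kovMul_single_single, add_zero, chooseRatio_zero_right,
        one_smul, ellOneMap_single, ContinuousLinearMap.flip_apply]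
  exact congr($h b)

variable [CompleteSpace V]

/-- On power series normalized by `kovWeight τ l`: the primitive in the direction `τ` that
vanishes on the hyperplane `v τ = 0`. -/
def kovInt (τ : Fin m) (l : ℝ) : ℓ¹(MultiIndex m, V) →L[ℝ] ℓ¹(MultiIndex m, V) :=
  weightedShift (fun α => l ^ 2 / (deg α + 1)) (fun α => α + single τ) (.id ℝ V)

/-- On power series normalized by `kovWeight τ l`: the `j`-th derivative of the primitive in the
direction `τ ≠ j`. -/
def kovDiff (τ : Fin m) (l : ℝ) (j : Fin m) : ℓ¹(MultiIndex m, V) →L[ℝ] ℓ¹(MultiIndex m, V) :=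
  weightedShift (fun α => l / (deg α - α τ) * α j) (fun α => α + single τ - single j) (.id ℝ V)

theorem abs_kovInt_coeff_le (l : ℝ) (α : MultiIndex m) : |l ^ 2 / (deg α + 1)| ≤ l ^ 2 := by
  rw [abs_of_nonneg (by positivity)]
  exact div_le_self (sq_nonneg l) (by simp)

theorem abs_kovDiff_coeff_le {j : Fin m} (hj : j ≠ τ) (l : ℝ) (α : MultiIndex m) :
    |l / (deg α - α τ) * α j| ≤ |l| := by
  have h : (α j : ℝ) + α τ ≤ deg α := by exact_mod_cast apply_add_apply_le_deg α hj
  have hj₀ : (0 : ℝ) ≤ α j := Nat.cast_nonneg _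
  rw [div_mul_eq_mul_div, mul_div_assoc, abs_mul, abs_of_nonneg (div_nonneg hj₀ (by linarith))]
  exact mul_le_of_le_one_right (abs_nonneg l) (div_le_one_of_le₀ (by linarith) (by linarith))

theorem tendsto_kovInt (τ : Fin m) :
    Tendsto (fun l => (kovInt τ l : ℓ¹(MultiIndex m, V) →L[ℝ] _)) (𝓝 0) (𝓝 0) :=
  squeeze_zero_norm (fun l => norm_weightedShift_le (sq_nonneg l) (abs_kovInt_coeff_le l) _ _)
    (Continuous.tendsto' (by fun_prop) _ _ (by simp) :
      Tendsto (fun l : ℝ => l ^ 2 * ‖ContinuousLinearMap.id ℝ V‖) _ _)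

theorem tendsto_kovDiff {j : Fin m} (hj : j ≠ τ) :
    Tendsto (fun l => (kovDiff τ l j : ℓ¹(MultiIndex m, V) →L[ℝ] _)) (𝓝 0) (𝓝 0) :=
  squeeze_zero_norm (fun l => norm_weightedShift_le (abs_nonneg l) (abs_kovDiff_coeff_le hj l) _ _)
    (Continuous.tendsto' (by fun_prop) _ _ (by simp) :
      Tendsto (fun l : ℝ => |l| * ‖ContinuousLinearMap.id ℝ V‖) _ _)

end KovalevskayaOperators

section Evaluation

variable {m : ℕ} {V V' W : Type*} [NormedAddCommGroup V] [NormedSpace ℝ V]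
  [NormedAddCommGroup V'] [NormedSpace ℝ V'] [NormedAddCommGroup W] [NormedSpace ℝ W]
  [CompleteSpace V] [CompleteSpace W]
  {τ : Fin m} {l r : ℝ} {w : MultiIndex m → ℝ} {v : Fin m → ℝ}

theorem weightedEval_ellOneMap (hw : ∀ α, r ^ deg α ≤ w α) (hv : v ∈ Metric.ball 0 r)
    (L : V →L[ℝ] W) (b : ℓ¹(MultiIndex m, V)) :
    weightedEval w v (ellOneMap _ L b) = L (weightedEval w v b) := by
  have h : weightedEval w v ∘L ellOneMap _ L = L ∘L weightedEval w v := ellOne_ext fun α x => by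
    simp [ellOneMap_single, weightedEval_single hw hv]
  exact congr($h b)

theorem weightedEval_kovInt_of_apply_eq_zero (hl : 0 < l) (hl' : l ≤ 1)
    (hv : v ∈ Metric.ball 0 (l ^ 2 / 2)) (hvτ : v τ = 0) (b : ℓ¹(MultiIndex m, V)) :
    weightedEval (kovWeight τ l) v (kovInt τ l b) = 0 := by
  have h : weightedEval (kovWeight τ l) v ∘L kovInt τ l = (0 : _ →L[ℝ] V) :=
    ellOne_ext fun α x => by
      rw [ContinuousLinearMap.comp_apply, kovInt, weightedShift_single (abs_kovInt_coeff_le l),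
        weightedEval_single (pow_deg_le_kovWeight hl hl') hv, monomial_add, monomial_single, hvτ]
      simp
  exact congr($h b)

theorem pd_weightedEval_kovInt_of_ne {j : Fin m} (hj : j ≠ τ) (hl : 0 < l) (hl' : l ≤ 1)
    (hv : v ∈ Metric.ball 0 (l ^ 2 / 2)) (b : ℓ¹(MultiIndex m, V)) :
    pd j (weightedEval (kovWeight τ l)) v (kovInt τ l b) =
      weightedEval (kovWeight τ l) v (kovDiff τ l j b) := by
  have hw (α : MultiIndex m) : (l ^ 2 / 2) ^ deg α ≤ kovWeight τ l α :=
    pow_deg_le_kovWeight hl hl' α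
  have h : pd j (weightedEval (kovWeight τ l)) v ∘L kovInt τ l =
      (weightedEval (kovWeight τ l) v ∘L kovDiff τ l j : _ →L[ℝ] V) := ellOne_ext fun α x => by
    rw [ContinuousLinearMap.comp_apply, kovInt, weightedShift_single (abs_kovInt_coeff_le l),
      pd_weightedEval_single hw hv, ContinuousLinearMap.comp_apply, kovDiff,
      weightedShift_single (abs_kovDiff_coeff_le hj l), weightedEval_single hw hv, smul_smul,
      smul_smul]
    congr 1
    obtain h₀ | h₀ := eq_or_ne (α j) 0
    · simp [h₀, hj]
    · obtain ⟨β, rfl⟩ := exists_eq_add_single h₀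
      rw [add_right_comm, add_tsub_cancel_right, add_right_comm β]
      have hcoeff := div_kovWeight_add_single_of_ne hj hl.ne' β
      have hτj : (β + single j + single τ) j = (β + single j) j := by simp [hj]
      rw [hτj]
      linear_combination ((β + single j) j * monomial (β + single τ) v) * hcoeff
  exact congr($h b)

theorem pd_weightedEval_kovInt_self (hl : 0 < l) (hl' : l ≤ 1)
    (hv : v ∈ Metric.ball 0 (l ^ 2 / 2)) (b : ℓ¹(MultiIndex m, V)) :
    pd τ (weightedEval (kovWeight τ l)) v (kovInt τ l b) = weightedEval (kovWeight τ l) v b := by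
  have hw (α : MultiIndex m) : (l ^ 2 / 2) ^ deg α ≤ kovWeight τ l α :=
    pow_deg_le_kovWeight hl hl' α
  have h : pd τ (weightedEval (kovWeight τ l)) v ∘L kovInt τ l =
      (weightedEval (kovWeight τ l) v : _ →L[ℝ] V) := ellOne_ext fun α x => by
    rw [ContinuousLinearMap.comp_apply, kovInt, weightedShift_single (abs_kovInt_coeff_le l),
      pd_weightedEval_single hw hv, weightedEval_single hw hv, smul_smul, add_tsub_cancel_right]
    congr 1
    simp only [Pi.add_apply, Pi.single_eq_same, Nat.cast_add, Nat.cast_one]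
    linear_combination monomial α v * div_kovWeight_add_single_self (τ := τ) hl.ne' α
  exact congr($h b)

theorem weightedEval_kovWeight_single_zero (hl : 0 < l) (hl' : l ≤ 1)
    (hv : v ∈ Metric.ball 0 (l ^ 2 / 2)) (x : V) :
    weightedEval (kovWeight τ l) v (lp.single 1 0 x) = x := by
  rw [weightedEval_single (pow_deg_le_kovWeight hl hl') hv, monomial_zero, kovWeight_zero]
  simp

variable [CompleteSpace V']

theorem weightedEval_kovMul (hl : 0 < l) (hl' : l ≤ 1) (hv : v ∈ Metric.ball 0 (l ^ 2 / 2))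
    (B : V →L[ℝ] V' →L[ℝ] W) (b : ℓ¹(MultiIndex m, V)) (c : ℓ¹(MultiIndex m, V')) :
    weightedEval (kovWeight τ l) v (kovMul τ B b c) =
      B (weightedEval (kovWeight τ l) v b) (weightedEval (kovWeight τ l) v c) := by
  have hw (α : MultiIndex m) : (l ^ 2 / 2) ^ deg α ≤ kovWeight τ l α :=
    pow_deg_le_kovWeight hl hl' α
  have hsingle (α : MultiIndex m) (x : V) :
      weightedEval (kovWeight τ l) v ∘L kovMul τ B (lp.single 1 α x) =
        B (weightedEval (kovWeight τ l) v (lp.single 1 α x)) ∘L weightedEval (kovWeight τ l) v :=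
    ellOne_ext fun β y => by
      simp only [ContinuousLinearMap.comp_apply, kovMul_single_single, weightedEval_single hw hv,
        map_smul, _root_.smul_apply, smul_smul]
      rw [mul_comm _ (chooseRatio τ α β), chooseRatio_mul_monomial_div_kovWeight hl.ne', mul_comm]
  have h : weightedEval (kovWeight τ l) v ∘L (kovMul τ B).flip c =
      B.flip (weightedEval (kovWeight τ l) v c) ∘L weightedEval (kovWeight τ l) v :=
    ellOne_ext fun α x => congr($(hsingle α x) c)
  exact congr($h b)

end Evaluation

section Encoding

variable {m : ℕ} {V : Type*} [NormedAddCommGroup V] [NormedSpace ℝ V] [CompleteSpace V]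
  {τ : Fin m} {l r : ℝ}

theorem abs_kovWeight_div_le (hl : 0 < l) (hl' : l ≤ 1) (hr : 0 < r) (hlr : l ≤ r)
    {α : MultiIndex m} (hα : α ≠ 0) : |kovWeight τ l α / r ^ deg α| ≤ l / r := by
  have hchoose : (1 : ℝ) ≤ (deg α).choose (α τ) := by exact_mod_cast choose_deg_pos τ α
  have hweight : kovWeight τ l α ≤ l ^ deg α :=
    (div_le_self (by positivity) hchoose).trans (pow_le_pow_of_le_one hl.le hl' (by lia))
  rw [abs_of_nonneg (div_nonneg (by unfold kovWeight; positivity) (by positivity))]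
  calc kovWeight τ l α / r ^ deg α ≤ (l / r) ^ deg α := by rw [div_pow]; gcongr
    _ ≤ l / r := pow_le_of_le_one (by positivity) ((div_le_one hr).2 hlr) (deg_eq_zero.not.2 hα)

/-- The operator turning coefficients for the weight `r ^ |α|` into coefficients of the same power
series for `kovWeight τ l`. -/
def changeWeight (τ : Fin m) (r l : ℝ) : ℓ¹(MultiIndex m, V) →L[ℝ] ℓ¹(MultiIndex m, V) :=
  weightedShift (fun α => kovWeight τ l α / r ^ deg α) id (.id ℝ V)

theorem abs_changeWeight_coeff_le (hl : 0 < l) (hl' : l ≤ 1) (hr : 0 < r) (hlr : l ≤ r)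
    (α : MultiIndex m) : |kovWeight τ l α / r ^ deg α| ≤ 1 := by
  obtain rfl | hα := eq_or_ne α 0
  · simp [kovWeight_zero, deg_zero]
  · exact (abs_kovWeight_div_le hl hl' hr hlr hα).trans ((div_le_one hr).2 hlr)

theorem weightedEval_changeWeight (hl : 0 < l) (hl' : l ≤ 1) (hr : 0 < r) (hlr : l ≤ r)
    {v : Fin m → ℝ} (hv : v ∈ Metric.ball 0 (l ^ 2 / 2)) (hv' : v ∈ Metric.ball 0 r) :
    weightedEval (kovWeight τ l) v ∘L changeWeight τ r l =
      (weightedEval (fun α => r ^ deg α) v : ℓ¹(MultiIndex m, V) →L[ℝ] V) :=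
  ellOne_ext fun α x => by
    have hw : kovWeight τ l α ≠ 0 := ((pow_deg_le_kovWeight hl hl' α).trans_lt' (by positivity)).ne'
    rw [ContinuousLinearMap.comp_apply, changeWeight,
      weightedShift_single (abs_changeWeight_coeff_le hl hl' hr hlr),
      weightedEval_single (pow_deg_le_kovWeight hl hl') hv,
      weightedEval_single (fun α => le_rfl) hv', smul_smul]
    congr 1
    simp only [id]
    field_simp

theorem norm_changeWeight_sub_le (hl : 0 < l) (hl' : l ≤ 1) (hr : 0 < r) (hlr : l ≤ r) :
    ‖changeWeight τ r l - lp.singleContinuousLinearMap ℝ (fun _ => V) 1 0 ∘L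
      weightedEval (fun α => r ^ deg α) 0‖ ≤ l / r := by
  refine opNorm_le_of_single (by positivity) fun α x => ?_
  rw [_root_.sub_apply, changeWeight,
    weightedShift_single (abs_changeWeight_coeff_le hl hl' hr hlr), ContinuousLinearMap.comp_apply,
    weightedEval_single (fun α => le_rfl) (Metric.mem_ball_self hr),
    lp.singleContinuousLinearMap_apply]
  obtain rfl | hα := eq_or_ne α 0
  · simp only [id, kovWeight_zero, deg_zero, monomial_zero, pow_zero, div_one, one_smul,
      ContinuousLinearMap.id_apply, sub_self, norm_zero]
    positivity
  · rw [monomial_zero_right hα, zero_div, zero_smul, lp.single_zero, sub_zero,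
      lp.norm_single one_pos, norm_smul]
    exact mul_le_mul_of_nonneg_right (abs_kovWeight_div_le hl hl' hr hlr hα) (norm_nonneg x)

theorem tendsto_changeWeight (hr : 0 < r) (b : ℓ¹(MultiIndex m, V)) :
    Tendsto (fun l => changeWeight τ r l b) (𝓝[>] 0)
      (𝓝 (lp.single 1 0 (weightedEval (fun α => r ^ deg α) 0 b))) := by
  have hbound : Tendsto (fun l => l / r) (𝓝[>] 0) (𝓝 0) :=
    ((continuous_id.div_const r).tendsto' 0 0 (zero_div r)).mono_left nhdsWithin_le_nhds
  have hop : Tendsto (fun l => changeWeight τ r l) (𝓝[>] 0)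
      (𝓝 (lp.singleContinuousLinearMap ℝ (fun _ => V) 1 0 ∘L
        weightedEval (fun α => r ^ deg α) 0)) := by
    refine tendsto_iff_norm_sub_tendsto_zero.2 <|
      squeeze_zero' (.of_forall fun _ => norm_nonneg _) ?_ hbound
    filter_upwards [Ioo_mem_nhdsGT (lt_min one_pos hr)] with l hl
    exact norm_changeWeight_sub_le hl.1 (lt_min_iff.1 hl.2).1.le hr (lt_min_iff.1 hl.2).2.le
  exact ((ContinuousLinearMap.apply ℝ _ b).continuous.tendsto _).comp hop

theorem exists_kovWeight_encoding {f : (Fin m → ℝ) → V} {p : Fin m → ℝ} (hf : AnalyticAt ℝ f p)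
    (τ : Fin m) :
    ∃ enc : ℝ → ℓ¹(MultiIndex m, V), Tendsto enc (𝓝[>] 0) (𝓝 (lp.single 1 0 (f p))) ∧
      ∀ᶠ l in 𝓝[>] 0, ∀ᶠ u in 𝓝 p, f u = weightedEval (kovWeight τ l) (u - p) (enc l) := by
  obtain ⟨r, hr, b, hb⟩ := exists_eq_weightedEval hf
  refine ⟨fun l => changeWeight τ r l b, ?_, ?_⟩
  · simpa [hb.self_of_nhds] using tendsto_changeWeight (τ := τ) hr b
  · filter_upwards [Ioo_mem_nhdsGT (lt_min one_pos hr)] with l hl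
    have hlt := lt_min_iff.1 hl.2
    have hball {s : ℝ} (hs : 0 < s) : ∀ᶠ u in 𝓝 p, u - p ∈ Metric.ball 0 s := by
      filter_upwards [Metric.ball_mem_nhds p hs] with u hu
      simpa [dist_eq_norm] using hu
    filter_upwards [hb, hball (half_pos (pow_pos hl.1 2)), hball hr] with u hu hul hur
    rw [hu, ← weightedEval_changeWeight hl.1 hlt.1.le hr hlt.2.le hul hur]
    rfl

end Encoding

section ImplicitFunction

variable {X Y : Type*} [NormedAddCommGroup X] [NormedSpace ℝ X] [CompleteSpace X]
  [NormedAddCommGroup Y] [NormedSpace ℝ Y] [CompleteSpace Y]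

theorem eventually_exists_eq_zero_of_apply_eq_self {F : X × Y → Y} (hF : ContDiff ℝ 1 F) {x₀ : X}
    (hx₀ : ∀ y, F (x₀, y) = y) : ∀ᶠ x in 𝓝 x₀, ∃ y, F (x, y) = 0 := by
  have hF' : HasStrictFDerivAt F (fderiv ℝ F (x₀, 0)) (x₀, 0) :=
    hF.contDiffAt.hasStrictFDerivAt one_ne_zero
  have hpartial : fderiv ℝ F (x₀, 0) ∘L .inr ℝ X Y = .id ℝ Y := by
    refine HasFDerivAt.unique (f := fun y => F (x₀, y))
      (hF'.hasFDerivAt.comp 0 (hasFDerivAt_prodMk_right x₀ 0)) ?_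
    simp only [hx₀]
    exact hasFDerivAt_id 0
  have hinv : (fderiv ℝ F (x₀, 0) ∘L .inr ℝ X Y).IsInvertible :=
    hpartial ▸ ⟨ContinuousLinearEquiv.refl ℝ Y, rfl⟩
  filter_upwards [hF'.eventually_apply_implicitFunctionOfProdDomain hinv] with x hx
  exact ⟨_, hx.trans (hx₀ 0)⟩

end ImplicitFunction

section TangentialJet

variable {m : ℕ} {V : Type*} [NormedAddCommGroup V] [NormedSpace ℝ V] {τ j : Fin m}
  {f g : (Fin m → ℝ) → V} {u p : Fin m → ℝ}

theorem pd_add (hf : DifferentiableAt ℝ f u) (hg : DifferentiableAt ℝ g u) :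
    pd j (fun v => f v + g v) u = pd j f u + pd j g u := by
  rw [pd, fderiv_fun_add hf hg, _root_.add_apply, pd, pd]

theorem analyticAt_pd [CompleteSpace V] (hf : AnalyticAt ℝ f u) : AnalyticAt ℝ (pd j f) u :=
  ((ContinuousLinearMap.apply ℝ V (Pi.single j 1 : Fin m → ℝ)).analyticAt _).comp hf.fderiv

theorem pd_eq_of_eq_on_hyperplane (hf : DifferentiableAt ℝ f p) (hg : DifferentiableAt ℝ g p)
    (hj : j ≠ τ) (h : ∀ᶠ u in 𝓝 p, u τ = p τ → f u = g u) : pd j f p = pd j g p := by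
  have hline : Tendsto (fun t : ℝ => p + t • Pi.single j 1) (𝓝 0) (𝓝 p) :=
    Continuous.tendsto' (by fun_prop) _ _ (by simp)
  rw [pd, pd, ← hf.lineDeriv_eq_fderiv, ← hg.lineDeriv_eq_fderiv]
  refine EventuallyEq.deriv_eq ?_
  filter_upwards [hline.eventually h] with t ht
  exact ht (by simp [hj.symm])

/-- The value of `f` together with its derivatives in the directions other than `τ`: the data a
first order system in Cauchy–Kovalevskaya form may depend on. -/
def tangentialJet (τ : Fin m) (f : (Fin m → ℝ) → V) (u : Fin m → ℝ) :
    V × ({j : Fin m // j ≠ τ} → V) :=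
  (f u, fun j => pd j f u)

theorem tangentialJet_add (hf : DifferentiableAt ℝ f u) (hg : DifferentiableAt ℝ g u) :
    tangentialJet τ (fun v => f v + g v) u = tangentialJet τ f u + tangentialJet τ g u :=
  Prod.ext rfl (funext fun _ => pd_add hf hg)

theorem tangentialJet_eq_of_eq_on_hyperplane (hf : DifferentiableAt ℝ f p)
    (hg : DifferentiableAt ℝ g p) (h : ∀ᶠ u in 𝓝 p, u τ = p τ → f u = g u) :
    tangentialJet τ f p = tangentialJet τ g p :=
  Prod.ext (h.self_of_nhds rfl) (funext fun j => pd_eq_of_eq_on_hyperplane hf hg j.2 h)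

theorem analyticAt_tangentialJet [CompleteSpace V] (hf : AnalyticAt ℝ f p) :
    AnalyticAt ℝ (tangentialJet τ f) p :=
  hf.prod (.pi fun _ => analyticAt_pd hf)

end TangentialJet

section CauchyKovalevskaya

variable {m : ℕ} {V W : Type*} [NormedAddCommGroup V] [NormedSpace ℝ V] [CompleteSpace V]
  [NormedAddCommGroup W] [NormedSpace ℝ W] [CompleteSpace W] {τ : Fin m} {l : ℝ}

/-- On power series normalized by `kovWeight τ l`: the tangential jet of the primitive in the
direction `τ`. -/
def kovJet (τ : Fin m) (l : ℝ) :
    ℓ¹(MultiIndex m, V) →L[ℝ] ℓ¹(MultiIndex m, V × ({j : Fin m // j ≠ τ} → V)) :=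
  ellOneMap _ (.inl ℝ _ _) ∘L kovInt τ l +
    ∑ j : {j : Fin m // j ≠ τ},
      ellOneMap _ (.inr ℝ _ _ ∘L .single ℝ (fun _ => V) j) ∘L kovDiff τ l j

theorem tendsto_kovJet (τ : Fin m) :
    Tendsto (fun l => (kovJet τ l : ℓ¹(MultiIndex m, V) →L[ℝ] _)) (𝓝 0) (𝓝 0) := by
  have hcomp (L : V →L[ℝ] V × ({j : Fin m // j ≠ τ} → V))
      {T : ℝ → ℓ¹(MultiIndex m, V) →L[ℝ] ℓ¹(MultiIndex m, V)} (hT : Tendsto T (𝓝 0) (𝓝 0)) :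
      Tendsto (fun l => ellOneMap _ L ∘L T l) (𝓝 0) (𝓝 0) :=
    ((ContinuousLinearMap.compL ℝ _ _ _ (ellOneMap _ L)).continuous.tendsto' 0 0
      (map_zero _)).comp hT
  simpa [kovJet] using (hcomp (.inl ℝ _ _) (tendsto_kovInt τ)).add
    (tendsto_finsetSum Finset.univ fun (j : {j : Fin m // j ≠ τ}) _ =>
      hcomp (.inr ℝ _ _ ∘L .single ℝ (fun _ => V) j) (tendsto_kovDiff j.2))

/-- The function whose derivative in the direction `τ` is the power series at `p` with normalized
coefficients `b`, and which vanishes on the hyperplane `u τ = p τ`. -/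
def kovPrimitive (τ : Fin m) (l : ℝ) (p : Fin m → ℝ) (b : ℓ¹(MultiIndex m, V)) (u : Fin m → ℝ) :
    V :=
  weightedEval (kovWeight τ l) (u - p) (kovInt τ l b)

section KovPrimitive

variable {p u : Fin m → ℝ} (hl : 0 < l) (hl' : l ≤ 1) (hu : u - p ∈ Metric.ball 0 (l ^ 2 / 2))
include hl hl' hu

theorem analyticAt_weightedEval_sub :
    AnalyticAt ℝ (fun u => (weightedEval (kovWeight τ l) (u - p) : _ →L[ℝ] V)) u :=
  AnalyticAt.fun_comp (f := fun u => u - p)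
    (analyticOnNhd_weightedEval (pow_deg_le_kovWeight hl hl') _ hu) (by fun_prop)

theorem analyticAt_kovPrimitive (b : ℓ¹(MultiIndex m, V)) :
    AnalyticAt ℝ (kovPrimitive τ l p b) u :=
  ((ContinuousLinearMap.apply ℝ V (kovInt τ l b)).analyticAt _).comp
    (analyticAt_weightedEval_sub hl hl' hu)

theorem kovPrimitive_eq_zero (hτ : u τ = p τ) (b : ℓ¹(MultiIndex m, V)) :
    kovPrimitive τ l p b u = 0 :=
  weightedEval_kovInt_of_apply_eq_zero hl hl' hu (by simp [hτ]) b

theorem pd_kovPrimitive (j : Fin m) (b : ℓ¹(MultiIndex m, V)) :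
    pd j (kovPrimitive τ l p b) u =
      pd j (weightedEval (kovWeight τ l)) (u - p) (kovInt τ l b) :=
  (pd_comp_sub (fun v => weightedEval (kovWeight τ l) v (kovInt τ l b)) p).trans <|
    pd_clm_apply
      (analyticOnNhd_weightedEval (pow_deg_le_kovWeight hl hl') _ hu).differentiableAt _

theorem pd_kovPrimitive_self (b : ℓ¹(MultiIndex m, V)) :
    pd τ (kovPrimitive τ l p b) u = weightedEval (kovWeight τ l) (u - p) b := by
  rw [pd_kovPrimitive hl hl' hu, pd_weightedEval_kovInt_self hl hl' hu]

theorem tangentialJet_kovPrimitive (b : ℓ¹(MultiIndex m, V)) :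
    tangentialJet τ (kovPrimitive τ l p b) u =
      weightedEval (kovWeight τ l) (u - p) (kovJet τ l b) := by
  have hpd (j : {j : Fin m // j ≠ τ}) : pd j (kovPrimitive τ l p b) u =
      weightedEval (kovWeight τ l) (u - p) (kovDiff τ l j b) := by
    rw [pd_kovPrimitive hl hl' hu, pd_weightedEval_kovInt_of_ne j.2 hl hl' hu]
  simp only [kovJet, tangentialJet, hpd, _root_.add_apply, _root_.sum_apply, map_add,
    map_sum, ContinuousLinearMap.comp_apply,
    weightedEval_ellOneMap (pow_deg_le_kovWeight hl hl') hu]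
  ext j <;> simp [kovPrimitive, Prod.fst_sum, Prod.snd_sum, Finset.sum_apply, Pi.single_apply]

end KovPrimitive

theorem exists_series_solution (B : V →L[ℝ] (V × ({j : Fin m // j ≠ τ} → V)) →L[ℝ] W)
    {K : W →L[ℝ] V} {P₀ : V} {J₀ : V × ({j : Fin m // j ≠ τ} → V)} (hK : ∀ w, B (K w) J₀ = w)
    {N : ℝ → ℓ¹(MultiIndex m, V)} {J : ℝ → ℓ¹(MultiIndex m, V × ({j : Fin m // j ≠ τ} → V))}
    {H : ℝ → ℓ¹(MultiIndex m, W)} {N₀ : V} (hN : Tendsto N (𝓝[>] 0) (𝓝 (lp.single 1 0 N₀)))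
    (hJ : Tendsto J (𝓝[>] 0) (𝓝 (lp.single 1 0 J₀)))
    (hH : Tendsto H (𝓝[>] 0) (𝓝 (lp.single 1 0 (B P₀ J₀)))) :
    ∀ᶠ l in 𝓝[>] 0, ∃ q : ℓ¹(MultiIndex m, W),
      kovMul τ B (lp.single 1 0 P₀ + ellOneMap _ K q)
        (J l + kovJet τ l (lp.single 1 0 P₀ + ellOneMap _ K q - N l)) = H l := by
  let F (x : (ℓ¹(MultiIndex m, V) × ℓ¹(MultiIndex m, V × ({j : Fin m // j ≠ τ} → V)) ×
      ℓ¹(MultiIndex m, W) × (ℓ¹(MultiIndex m, V) →L[ℝ] ℓ¹(MultiIndex m, V × ({j // j ≠ τ} → V)))) ×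
      ℓ¹(MultiIndex m, W)) : ℓ¹(MultiIndex m, W) :=
    kovMul τ B (lp.single 1 0 P₀ + ellOneMap _ K x.2)
      (x.1.2.1 + x.1.2.2.2 (lp.single 1 0 P₀ + ellOneMap _ K x.2 - x.1.1)) - x.1.2.2.1
  have hF : ContDiff ℝ 1 F := by fun_prop
  have hF₀ (q : ℓ¹(MultiIndex m, W)) :
      F ((lp.single 1 0 N₀, lp.single 1 0 J₀, lp.single 1 0 (B P₀ J₀), 0), q) = q := by
    have hKq : ellOneMap (MultiIndex m) (B.flip J₀) ∘L ellOneMap _ K = .id ℝ _ :=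
      ellOne_ext fun α w => by simp [ellOneMap_single, hK]
    simp only [F, _root_.zero_apply]
    rw [add_zero, kovMul_single_zero_right, map_add, ellOneMap_single,
      ContinuousLinearMap.flip_apply, add_sub_cancel_left]
    exact congr($hKq q)
  have htendsto : Tendsto (fun l => (N l, J l, H l, (kovJet τ l : ℓ¹(MultiIndex m, V) →L[ℝ] _)))
      (𝓝[>] 0) (𝓝 (lp.single 1 0 N₀, lp.single 1 0 J₀, lp.single 1 0 (B P₀ J₀), 0)) :=
    hN.prodMk_nhds (hJ.prodMk_nhds (hH.prodMk_nhds
      ((tendsto_kovJet τ).mono_left nhdsWithin_le_nhds)))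
  filter_upwards [htendsto.eventually (eventually_exists_eq_zero_of_apply_eq_self hF hF₀)]
    with l ⟨q, hq⟩
  exact ⟨q, sub_eq_zero.1 hq⟩

theorem exists_analyticAt_cauchy_solution {p : Fin m → ℝ} {y₀ : (Fin m → ℝ) → V}
    (hy₀ : AnalyticAt ℝ y₀ p) {h : (Fin m → ℝ) → W} (hh : AnalyticAt ℝ h p)
    (B : V →L[ℝ] (V × ({j : Fin m // j ≠ τ} → V)) →L[ℝ] W) {K : W →L[ℝ] V}
    (hK : ∀ w, B (K w) (tangentialJet τ y₀ p) = w) {P₀ : V}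
    (hP₀ : B P₀ (tangentialJet τ y₀ p) = h p) :
    ∃ y : (Fin m → ℝ) → V, AnalyticAt ℝ y p ∧ (∀ᶠ u in 𝓝 p, u τ = p τ → y u = y₀ u) ∧
      pd τ y p = P₀ ∧ ∀ᶠ u in 𝓝 p, B (pd τ y u) (tangentialJet τ y u) = h u := by
  obtain ⟨J, hJ, hJu⟩ := exists_kovWeight_encoding (analyticAt_tangentialJet (τ := τ) hy₀) τ
  obtain ⟨N, hN, hNu⟩ := exists_kovWeight_encoding (analyticAt_pd (j := τ) hy₀) τ
  obtain ⟨H, hH, hHu⟩ := exists_kovWeight_encoding hh τ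
  rw [← hP₀] at hH
  obtain ⟨l, hJu, hNu, hHu, ⟨q, hq⟩, hl, hl'⟩ := (hJu.and <| hNu.and <| hHu.and <|
    (exists_series_solution B hK hN hJ hH).and (Ioo_mem_nhdsGT one_pos)).exists
  set Q := lp.single 1 0 P₀ + ellOneMap _ K q - N l with hQ
  set y := fun u => y₀ u + kovPrimitive τ l p Q u
  have hball : ∀ᶠ u in 𝓝 p, u - p ∈ Metric.ball 0 (l ^ 2 / 2) := by
    filter_upwards [Metric.ball_mem_nhds p (half_pos (pow_pos hl 2))] with u hu
    simpa [dist_eq_norm] using hu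
  have hy : AnalyticAt ℝ y p := hy₀.add (analyticAt_kovPrimitive hl hl'.le hball.self_of_nhds Q)
  have hyp : ∀ᶠ u in 𝓝 p, u τ = p τ → y u = y₀ u := by
    filter_upwards [hball] with u hu hτ
    simp [y, kovPrimitive_eq_zero hl hl'.le hu hτ]
  have heval {u : Fin m → ℝ} (hu : u - p ∈ Metric.ball 0 (l ^ 2 / 2)) :
      weightedEval (kovWeight τ l) (u - p) (lp.single 1 0 P₀ + ellOneMap _ K q) =
        P₀ + K (weightedEval (kovWeight τ l) (u - p) q) := by
    rw [map_add, weightedEval_kovWeight_single_zero hl hl'.le hu,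
      weightedEval_ellOneMap (pow_deg_le_kovWeight hl hl'.le) hu]
  have hpd : ∀ᶠ u in 𝓝 p, pd τ y u = P₀ + K (weightedEval (kovWeight τ l) (u - p) q) := by
    filter_upwards [hball, hNu, hy₀.eventually_analyticAt] with u hu hN hy₀u
    rw [pd_add hy₀u.differentiableAt (analyticAt_kovPrimitive hl hl'.le hu Q).differentiableAt, hN,
      pd_kovPrimitive_self hl hl'.le hu, ← map_add, hQ, add_sub_cancel, heval hu]
  have heq : ∀ᶠ u in 𝓝 p, B (pd τ y u) (tangentialJet τ y u) = h u := by
    filter_upwards [hball, hpd, hJu, hHu, hy₀.eventually_analyticAt] with u hu hpd hJ hH hy₀u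
    rw [tangentialJet_add hy₀u.differentiableAt
      (analyticAt_kovPrimitive hl hl'.le hu Q).differentiableAt, hJ,
      tangentialJet_kovPrimitive hl hl'.le hu, ← map_add, hpd, hH, ← hq,
      weightedEval_kovMul hl hl'.le hu, heval hu]
  refine ⟨y, hy, hyp, ?_, heq⟩
  have hq₀ : weightedEval (kovWeight τ l) (p - p) q = 0 := by
    have h := heq.self_of_nhds
    rwa [tangentialJet_eq_of_eq_on_hyperplane hy.differentiableAt hy₀.differentiableAt hyp,
      hpd.self_of_nhds, map_add, _root_.add_apply, hP₀, hK, add_eq_left] at h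
  rw [hpd.self_of_nhds, hq₀, map_zero, add_zero]

end CauchyKovalevskaya

section ExteriorDerivative

variable {m : ℕ} {E E' F : Type*} [NormedAddCommGroup E] [NormedSpace ℝ E]
  [NormedAddCommGroup E'] [NormedSpace ℝ E'] [NormedAddCommGroup F] [NormedSpace ℝ F]
  {p u : Fin m → ℝ} {τ : Fin m}

theorem pd_sub {j : Fin m} {f g : (Fin m → ℝ) → F} (hf : DifferentiableAt ℝ f u)
    (hg : DifferentiableAt ℝ g u) : pd j (fun v => f v - g v) u = pd j f u - pd j g u := by
  rw [pd, fderiv_fun_sub hf hg, _root_.sub_apply, pd, pd]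

theorem pd_bilinear (B : E →L[ℝ] E' →L[ℝ] F) {j : Fin m} {f : (Fin m → ℝ) → E}
    {g : (Fin m → ℝ) → E'} (hf : DifferentiableAt ℝ f u) (hg : DifferentiableAt ℝ g u) :
    pd j (fun v => B (f v) (g v)) u = B (f u) (pd j g u) + B (pd j f u) (g u) := by
  rw [pd, B.fderiv_of_bilinear hf hg]
  rfl

theorem analyticAt_bilinear_comp (B : E →L[ℝ] E' →L[ℝ] F) {f : (Fin m → ℝ) → E}
    {g : (Fin m → ℝ) → E'} (hf : AnalyticAt ℝ f u) (hg : AnalyticAt ℝ g u) :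
    AnalyticAt ℝ (fun v => B (f v) (g v)) u :=
  AnalyticAt.fun_comp (f := fun v => (f v, g v)) (B.analyticAt_bilinear _) (hf.prod hg)

/-- The coefficient of `du^j ∧ du^k` in the exterior derivative of the vector valued 1-form
`∑ k, η k du^k`. -/
def dCoeff (η : Fin m → (Fin m → ℝ) → F) (j k : Fin m) (u : Fin m → ℝ) : F :=
  pd j (η k) u - pd k (η j) u

theorem dCoeff_self (η : Fin m → (Fin m → ℝ) → F) (j : Fin m) : dCoeff η j j u = 0 :=
  sub_self _

theorem dCoeff_swap (η : Fin m → (Fin m → ℝ) → F) (j k : Fin m) :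
    dCoeff η j k u = -dCoeff η k j u :=
  (neg_sub _ _).symm

/-- `Φ j k` are the germs at `p` of the coefficients of `du^j ∧ du^k` in a closed analytic vector
valued 2-form. -/
structure IsClosedTwoForm (Φ : Fin m → Fin m → (Fin m → ℝ) → F) (p : Fin m → ℝ) : Prop where
  analyticAt : ∀ j k, AnalyticAt ℝ (Φ j k) p
  skew : ∀ j k, ∀ᶠ u in 𝓝 p, Φ j k u = -Φ k j u
  closed : ∀ i j k, ∀ᶠ u in 𝓝 p, pd i (Φ j k) u + pd j (Φ k i) u + pd k (Φ i j) u = 0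

theorem isClosedTwoForm_of_cyclic {p : Fin 3 → ℝ}
    {Φ : Fin 3 → Fin 3 → (Fin 3 → ℝ) → F} (hΦ : ∀ j k, AnalyticAt ℝ (Φ j k) p)
    (hskew : ∀ j k, ∀ᶠ u in 𝓝 p, Φ j k u = -Φ k j u)
    (hclosed : ∀ᶠ u in 𝓝 p, pd 0 (Φ 1 2) u + pd 1 (Φ 2 0) u + pd 2 (Φ 0 1) u = 0) :
    IsClosedTwoForm Φ p where
  analyticAt := hΦ
  skew := hskew
  closed i j k := by
    have hskew' : ∀ᶠ u in 𝓝 p, ∀ j k, ∀ᶠ v in 𝓝 u, Φ j k v = -Φ k j v :=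
      eventually_all.2 fun j => eventually_all.2 fun k => (hskew j k).eventually_nhds
    filter_upwards [hskew', hclosed] with u hu hclosed
    have : IsAddTorsionFree F := .of_isTorsionFree ℝ F
    have hpd (i j k : Fin 3) : pd i (Φ j k) u = -pd i (Φ k j) u := by
      rw [pd_congr (hu j k), pd, fderiv_fun_neg, _root_.neg_apply, pd]
    have hpd_self (i j : Fin 3) : pd i (Φ j j) u = 0 := self_eq_neg.1 (hpd i j j)
    have h₁ := hpd 0 2 1
    have h₂ := hpd 1 0 2
    have h₃ := hpd 2 1 0
    fin_cases i <;> fin_cases j <;> fin_cases k <;> simp [hpd_self] <;> grind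

theorem isClosedTwoForm_pi {ι : Type*} [Fintype ι]
    {Φ : ι → Fin m → Fin m → (Fin m → ℝ) → ℝ} (hΦ : ∀ i, IsClosedTwoForm (Φ i) p) :
    IsClosedTwoForm (fun j k u i => Φ i j k u) p where
  analyticAt j k := analyticAt_pi_iff.2 fun i => (hΦ i).analyticAt j k
  skew j k := (eventually_all.2 fun i => (hΦ i).skew j k).mono fun u hu => funext hu
  closed i j k := by
    filter_upwards [eventually_all.2 fun n => (hΦ n).closed i j k,
      eventually_all.2 fun n => eventually_all.2 fun j => eventually_all.2 fun k =>
        ((hΦ n).analyticAt j k).eventually_analyticAt] with u hu hanal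
    ext n
    have hpd (i j k : Fin m) : pd i (fun u n => Φ n j k u) u n = pd i (Φ n j k) u :=
      (pd_clm (.proj n) (analyticAt_pi_iff.2 fun n => hanal n j k).differentiableAt).symm
    simpa [hpd] using hu n

variable [CompleteSpace F]

theorem eventuallyEq_of_pd_eq {f g : (Fin m → ℝ) → F} (hf : AnalyticAt ℝ f p)
    (hg : AnalyticAt ℝ g p) (hp : ∀ᶠ u in 𝓝 p, u τ = p τ → f u = g u)
    (hpd : ∀ᶠ u in 𝓝 p, pd τ f u = pd τ g u) : f =ᶠ[𝓝 p] g := by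
  obtain ⟨ε, hε, h⟩ := Metric.eventually_nhds_iff_ball.1 <|
    hp.and <| hpd.and <| hf.eventually_analyticAt.and hg.eventually_analyticAt
  filter_upwards [Metric.ball_mem_nhds p hε] with u hu
  set line : ℝ → Fin m → ℝ := Function.update u τ
  have hd {h : (Fin m → ℝ) → F} {t : ℝ} (hh : AnalyticAt ℝ h (line t)) :
      HasDerivAt (h ∘ line) (pd τ h (line t)) t :=
    hh.differentiableAt.hasFDerivAt.comp_hasDerivAt t (hasDerivAt_update u τ t)
  have hball (t : ℝ) (ht : t ∈ Metric.ball (p τ) ε) : line t ∈ Metric.ball p ε := by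
    refine (dist_pi_lt_iff hε).2 fun i => ?_
    obtain rfl | hi := eq_or_ne i τ
    · simpa [line] using ht
    · simpa [line, hi] using (dist_le_pi_dist u p i).trans_lt hu
  have heq : EqOn (f ∘ line) (g ∘ line) (Metric.ball (p τ) ε) :=
    Metric.isOpen_ball.eqOn_of_deriv_eq (convex_ball _ _).isPreconnected
      (fun t ht => (hd (h _ (hball t ht)).2.2.1).differentiableAt.differentiableWithinAt)
      (fun t ht => (hd (h _ (hball t ht)).2.2.2).differentiableAt.differentiableWithinAt)
      (fun t ht => by
        obtain ⟨-, hpd, hf, hg⟩ := h _ (hball t ht)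
        rw [(hd hf).deriv, (hd hg).deriv, hpd])
      (Metric.mem_ball_self hε)
      ((h _ (hball _ (Metric.mem_ball_self hε))).1 (by simp [line]))
  simpa [line] using heq (show u τ ∈ _ from (dist_le_pi_dist u p τ).trans_lt hu)

theorem pd_comm {f : (Fin m → ℝ) → F} (hf : AnalyticAt ℝ f u) (i j : Fin m) :
    pd i (pd j f) u = pd j (pd i f) u := by
  have hpd (i j : Fin m) :
      pd i (pd j f) u = fderiv ℝ (fderiv ℝ f) u (Pi.single i 1) (Pi.single j 1) :=
    pd_clm_apply hf.fderiv.differentiableAt _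
  rw [hpd, hpd]
  exact (hf.contDiffAt.isSymmSndFDerivAt_of_omega).eq _ _

theorem analyticAt_dCoeff {η : Fin m → (Fin m → ℝ) → F} (hη : ∀ k, AnalyticAt ℝ (η k) u)
    (j k : Fin m) :
    AnalyticAt ℝ (dCoeff η j k) u :=
  (analyticAt_pd (hη k)).sub (analyticAt_pd (hη j))

theorem dCoeff_closed {η : Fin m → (Fin m → ℝ) → F} (hη : ∀ k, AnalyticAt ℝ (η k) u)
    (i j k : Fin m) :
    pd i (dCoeff η j k) u + pd j (dCoeff η k i) u + pd k (dCoeff η i j) u = 0 := by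
  have hd (j k : Fin m) : DifferentiableAt ℝ (pd j (η k)) u :=
    (analyticAt_pd (hη k)).differentiableAt
  have hpd (i j k : Fin m) :
      pd i (dCoeff η j k) u = pd i (pd j (η k)) u - pd i (pd k (η j)) u :=
    pd_sub (hd j k) (hd k j)
  rw [hpd, hpd, hpd, pd_comm (hη k) i j, pd_comm (hη i) j k, pd_comm (hη j) k i]
  abel

theorem isClosedTwoForm_dCoeff {η : Fin m → (Fin m → ℝ) → F} (hη : ∀ k, AnalyticAt ℝ (η k) p) :
    IsClosedTwoForm (dCoeff η) p where
  analyticAt := analyticAt_dCoeff hη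
  skew j k := .of_forall fun _ => dCoeff_swap η j k
  closed i j k := (eventually_all.2 fun k => (hη k).eventually_analyticAt).mono fun _ hu =>
    dCoeff_closed hu i j k

theorem IsClosedTwoForm.eventuallyEq {Φ Ψ : Fin m → Fin m → (Fin m → ℝ) → F}
    (hΦ : IsClosedTwoForm Φ p) (hΨ : IsClosedTwoForm Ψ p) {j k : Fin m}
    (hj : Φ τ j =ᶠ[𝓝 p] Ψ τ j) (hk : Φ k τ =ᶠ[𝓝 p] Ψ k τ)
    (h : ∀ᶠ u in 𝓝 p, u τ = p τ → Φ j k u = Ψ j k u) : Φ j k =ᶠ[𝓝 p] Ψ j k := by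
  refine eventuallyEq_of_pd_eq (hΦ.analyticAt j k) (hΨ.analyticAt j k) h ?_
  filter_upwards [hΦ.closed τ j k, hΨ.closed τ j k, hj.eventuallyEq_nhds, hk.eventuallyEq_nhds]
    with u hΦu hΨu hju hku
  rw [add_assoc, ← eq_neg_iff_add_eq_zero] at hΦu hΨu
  rw [hΦu, hΨu, pd_congr hku, pd_congr hju]

end ExteriorDerivative

section CrossProductAlgebra

theorem vecMul_crossMat (v w : Fin 3 → ℝ) : w ᵥ* crossMat v = v ⨯₃ w := by
  ext i
  fin_cases i <;> simp [crossMat, cross_apply, vecMul, dotProduct, Fin.sum_univ_three] <;> ring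

theorem crossMat_transpose (v : Fin 3 → ℝ) : (crossMat v)ᵀ = -crossMat v := by
  ext i j
  fin_cases i <;> fin_cases j <;> simp [crossMat]

theorem mul_eq_mul_of_cross_eq_zero {v w : Fin 3 → ℝ} (h : v ⨯₃ w = 0) (i j : Fin 3) :
    v i * w j = v j * w i := by
  simp only [cross_apply, cons_eq_zero_iff, sub_eq_zero, zero_empty, and_true] at h
  obtain ⟨h₀, h₁, h₂⟩ := h
  fin_cases i <;> fin_cases j <;> simp [h₀, h₁, h₂]

theorem eq_zero_of_cross_eq_zero {u v w : Fin 3 → ℝ} (hv : u ⨯₃ v = 0) (hw : u ⨯₃ w = 0)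
    (hvw : v ⨯₃ w ≠ 0) : u = 0 := by
  have hcross : u ⨯₃ (v ⨯₃ w) = 0 := by simp [leibniz_cross, hv, hw]
  have hdot : u ⬝ᵥ v ⨯₃ w = 0 := by
    rw [triple_product_permutation, triple_product_permutation, hv, dotProduct_zero]
  have h := cross_dot_cross u (v ⨯₃ w) u (v ⨯₃ w)
  simpa [hcross, hdot, dotProduct_self_eq_zero, hvw] using h

theorem sum_eq_add_cyclic {M : Type*} [AddCommMonoid M] (f : Fin 3 → M) (k : Fin 3) :
    ∑ n, f n = f k + f (k + 1) + f (k + 2) := by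
  rw [← Equiv.sum_comp (Equiv.addLeft k), Fin.sum_univ_three]
  simp

variable (ω : Fin 3 → Fin 3 → ℝ)

theorem det_of_eq_triple_product (k : Fin 3) :
    (Matrix.of ω).det = ω k ⬝ᵥ ω (k + 1) ⨯₃ ω (k + 2) := by
  have h : (Matrix.of ω).det = ω 0 ⬝ᵥ ω 1 ⨯₃ ω 2 := by
    rw [triple_product_eq_det]
    congr 1
    ext i j
    fin_cases i <;> rfl
  rw [h]
  fin_cases k
  · rfl
  · exact triple_product_permutation _ _ _
  · exact (triple_product_permutation _ _ _).trans (triple_product_permutation _ _ _)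

theorem dot_cross_succ (j k : Fin 3) :
    ω j ⬝ᵥ ω (k + 1) ⨯₃ ω (k + 2) = if j = k then (Matrix.of ω).det else 0 := by
  have h : j = k ∨ j = k + 1 ∨ j = k + 2 := by grind
  obtain rfl | rfl | rfl := h
  · simp [det_of_eq_triple_product ω j]
  · simp
  · simp

theorem det_smul_eq_sum_dot_smul_cross (b : Fin 3 → ℝ) :
    (Matrix.of ω).det • b = ∑ k, (b ⬝ᵥ ω k) • (ω (k + 1) ⨯₃ ω (k + 2)) := by
  rw [det_of_eq_triple_product ω 0]
  ext i
  fin_cases i <;> simp [cross_apply, Fin.sum_univ_three, dotProduct] <;> ring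

theorem det_smul_eq_sum_triple_smul (b : Fin 3 → ℝ) :
    (Matrix.of ω).det • b = ∑ k, (b ⬝ᵥ ω (k + 1) ⨯₃ ω (k + 2)) • ω k := by
  rw [det_of_eq_triple_product ω 0]
  ext i
  fin_cases i <;> simp [cross_apply, Fin.sum_univ_three, dotProduct] <;> ring

end CrossProductAlgebra

section Torsion

/-- Given vectors `b k`, playing the role of `Ω` contracted with `∂_{k+1} ∧ ∂_{k+2}`, and a coframe
`ω` at a point, this is the only candidate for the infinitesimal rotation coefficients `θ` of a
Levi-Civita connection with `θ (k+1) × ω (k+2) - θ (k+2) × ω (k+1) = b k`. -/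
def connectionCoeff (b ω : Fin 3 → Fin 3 → ℝ) (j : Fin 3) : Fin 3 → ℝ :=
  (Matrix.of ω).det⁻¹ • (((∑ n, b n ⬝ᵥ ω n) / 2) • ω j - ∑ n, (b n ⬝ᵥ ω j) • ω n)

variable {b ω : Fin 3 → Fin 3 → ℝ}

theorem connectionCoeff_cross_sub (hω : (Matrix.of ω).det ≠ 0) (k : Fin 3) :
    connectionCoeff b ω (k + 1) ⨯₃ ω (k + 2) - connectionCoeff b ω (k + 2) ⨯₃ ω (k + 1) = b k := by
  have h : (Matrix.of ω).det • b k = _ :=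
    (det_smul_eq_sum_dot_smul_cross ω (b k)).trans (sum_eq_add_cyclic _ k)
  rw [← inv_smul_smul₀ hω (b k), h]
  have h₁ : k + 1 + 1 = k + 2 := by grind
  have h₂ : k + 1 + 2 = k := by grind
  have h₃ : k + 2 + 1 = k := by grind
  have h₄ : k + 2 + 2 = k + 1 := by grind
  simp only [connectionCoeff, sum_eq_add_cyclic _ k, map_smul, map_sub, map_add,
    LinearMap.smul_apply, LinearMap.sub_apply, LinearMap.add_apply, cross_self, h₁, h₂, h₃, h₄]
  rw [← cross_anticomm (ω (k + 1)) (ω (k + 2)), ← cross_anticomm (ω (k + 2)) (ω k)]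
  module

theorem connectionCoeff_dot_cross (hω : (Matrix.of ω).det ≠ 0) {j k : Fin 3} (hjk : j ≠ k) :
    connectionCoeff b ω j ⬝ᵥ ω (k + 1) ⨯₃ ω (k + 2) = -(b k ⬝ᵥ ω j) := by
  simp [connectionCoeff, dot_cross_succ, sub_dotProduct, sum_dotProduct, hjk]
  field_simp

theorem det_mul_dot_connectionCoeff_cross (hω : (Matrix.of ω).det ≠ 0) (j : Fin 3)
    (β : Fin 3 → ℝ) :
    (Matrix.of ω).det * (ω j ⬝ᵥ connectionCoeff b ω j ⨯₃ β) =
      (β ⬝ᵥ ω (j + 2) ⨯₃ ω j) * (b (j + 2) ⬝ᵥ ω j) -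
        (β ⬝ᵥ ω j ⨯₃ ω (j + 1)) * (b (j + 1) ⬝ᵥ ω j) := by
  have hβ := (det_smul_eq_sum_triple_smul ω β).trans (sum_eq_add_cyclic _ j)
  have h₁ := connectionCoeff_dot_cross (b := b) hω (show j ≠ j + 1 by simp)
  have h₂ := connectionCoeff_dot_cross (b := b) hω (show j ≠ j + 2 by simp)
  rw [show j + 1 + 1 = j + 2 by grind, show j + 1 + 2 = j by grind] at hβ h₁
  rw [show j + 2 + 1 = j by grind, show j + 2 + 2 = j + 1 by grind] at hβ h₂
  rw [← cross_anticomm, dotProduct_neg, neg_inj] at h₂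
  rw [← triple_product_permutation, ← smul_eq_mul, ← smul_dotProduct, hβ, add_dotProduct,
    add_dotProduct, smul_dotProduct, smul_dotProduct, smul_dotProduct, dot_self_cross,
    triple_product_permutation (ω (j + 1)), triple_product_permutation (ω j), h₂,
    triple_product_permutation (ω (j + 2)), triple_product_permutation (ω j), h₁]
  simp only [smul_eq_mul]
  ring

theorem exists_cross_ne_zero
    (hb : ∀ v : Fin 3 → ℝ, v ≠ 0 → ∃ k, v (k + 2) • b (k + 1) ≠ v (k + 1) • b (k + 2)) :
    ∃ k, b k ⨯₃ b (k + 1) ≠ 0 := by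
  by_contra! h
  obtain ⟨i, hi⟩ : ∃ i, (fun k => b k i) ≠ 0 := by
    by_contra! hi
    obtain ⟨k, hk⟩ := hb 1 one_ne_zero
    exact hk (by simp [show b = 0 from funext₂ fun k i => congr_fun (hi i) k])
  obtain ⟨k, hk⟩ := hb _ hi
  have hk' := h (k + 1)
  rw [show k + 1 + 1 = k + 2 by grind] at hk'
  exact hk (funext fun j => by
    simpa [mul_comm] using (mul_eq_mul_of_cross_eq_zero hk' j i))

/-- The coframe `ω` at a point is in general position with respect to the torsion `b` and the
coordinate direction `k`. -/
structure IsAdapted (b ω : Fin 3 → Fin 3 → ℝ) (k : Fin 3) : Prop where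
  det_ne_zero : (Matrix.of ω).det ≠ 0
  dot_succ_ne_zero : b k ⬝ᵥ ω (k + 1) ≠ 0
  dot_add_two : b k ⬝ᵥ ω (k + 2) = 0
  succ_dot_add_two_ne_zero : b (k + 1) ⬝ᵥ ω (k + 2) ≠ 0

theorem exists_isAdapted {k : Fin 3} (hb : b k ⨯₃ b (k + 1) ≠ 0) : ∃ ω, IsAdapted b ω k := by
  set n := b k ⨯₃ b (k + 1) with hn
  have hk : b k ⬝ᵥ b k ≠ 0 := dotProduct_self_eq_zero.not.2 fun h => hb (by simp [hn, h])
  have hnn : n ⬝ᵥ n ≠ 0 := dotProduct_self_eq_zero.not.2 hb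
  have hnb : n ⬝ᵥ b k = 0 := by rw [dotProduct_comm, hn, dot_self_cross]
  refine ⟨fun j => ![n, b k, n ⨯₃ b k] (j - k), ?_, ?_, ?_, ?_⟩
  · rw [det_of_eq_triple_product _ k, triple_product_permutation, triple_product_permutation]
    simp [cross_dot_cross, hk, hnn, hnb]
  · simpa using hk
  · simp
  · have : b (k + 1) ⬝ᵥ n ⨯₃ b k = n ⬝ᵥ n := by
      rw [triple_product_permutation, ← hn]
    simpa [this] using hnn

theorem IsAdapted.det_smul_eq_of_cross_eq_cross {k : Fin 3} (h : IsAdapted b ω k)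
    {α β : Fin 3 → ℝ} (hαβ : ∀ j ≠ k, connectionCoeff b ω j ⨯₃ β = α ⨯₃ ω j) :
    (Matrix.of ω).det • β = (β ⬝ᵥ ω (k + 2) ⨯₃ ω k) • ω (k + 1) := by
  have e₁ : k + 1 + 1 = k + 2 := by grind
  have e₂ : k + 1 + 2 = k := by grind
  have e₃ : k + 2 + 1 = k := by grind
  have e₄ : k + 2 + 2 = k + 1 := by grind
  have hdot := det_mul_dot_connectionCoeff_cross (b := b) h.det_ne_zero
  have hk : β ⬝ᵥ ω (k + 1) ⨯₃ ω (k + 2) = 0 := by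
    have h₂ := hdot (k + 2) β
    rw [hαβ _ (by simp), dot_cross_self, e₃, e₄, h.dot_add_two] at h₂
    simpa [h.succ_dot_add_two_ne_zero] using h₂
  have hk₂ : β ⬝ᵥ ω k ⨯₃ ω (k + 1) = 0 := by
    have h₁ := hdot (k + 1) β
    rw [hαβ _ (by simp), dot_cross_self, e₁, e₂, hk] at h₁
    simpa [h.dot_succ_ne_zero] using h₁
  rw [det_smul_eq_sum_triple_smul, sum_eq_add_cyclic _ k, e₁, e₂, e₃, e₄, hk, hk₂, zero_smul,
    zero_smul, zero_add, add_zero]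

theorem IsAdapted.eq_zero_of_cross_eq_cross {k : Fin 3} (h : IsAdapted b ω k) {α β : Fin 3 → ℝ}
    (hαβ : ∀ j ≠ k, connectionCoeff b ω j ⨯₃ β = α ⨯₃ ω j) : α = 0 ∧ β = 0 := by
  have hdet := h.det_smul_eq_of_cross_eq_cross hαβ
  have hsum : ω (k + 2) ⬝ᵥ connectionCoeff b ω (k + 1) ⨯₃ β +
      ω (k + 1) ⬝ᵥ connectionCoeff b ω (k + 2) ⨯₃ β = 0 := by
    rw [hαβ _ (by simp), hαβ _ (by simp), triple_product_permutation,
      triple_product_permutation _ α, ← cross_anticomm, dotProduct_neg, neg_add_cancel]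
  have hk₁ : β ⬝ᵥ ω (k + 2) ⨯₃ ω k = 0 := by
    have hdet_sum := congr_arg ((Matrix.of ω).det • ·) hsum
    simp only [smul_add, ← dotProduct_smul, ← map_smul, hdet, smul_zero] at hdet_sum
    simp only [map_smul, dotProduct_smul, dot_cross_self, smul_zero, add_zero] at hdet_sum
    rw [triple_product_permutation _ (connectionCoeff b ω (k + 1)),
      connectionCoeff_dot_cross h.det_ne_zero (by simp)] at hdet_sum
    simpa [h.dot_succ_ne_zero] using hdet_sum
  have hβ : β = 0 := by simpa [hk₁, h.det_ne_zero] using hdet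
  have hα (j : Fin 3) (hj : j ≠ k) : α ⨯₃ ω j = 0 := by simp [← hαβ j hj, hβ]
  have hne : ω (k + 1) ⨯₃ ω (k + 2) ≠ 0 := fun h₀ =>
    h.det_ne_zero (by rw [det_of_eq_triple_product ω k, h₀, dotProduct_zero])
  exact ⟨eq_zero_of_cross_eq_zero (hα _ (by simp)) (hα _ (by simp)) hne, hβ⟩

theorem IsAdapted.exists_cross_sub_cross_eq {k : Fin 3} (h : IsAdapted b ω k)
    (g : Fin 3 → Fin 3 → ℝ) :
    ∃ α β, ∀ j ≠ k, connectionCoeff b ω j ⨯₃ β - α ⨯₃ ω j = g j := by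
  let T : (Fin 3 → ℝ) × (Fin 3 → ℝ) →ₗ[ℝ] (Fin 3 → ℝ) × (Fin 3 → ℝ) :=
    .prod (crossProduct (connectionCoeff b ω (k + 1)) ∘ₗ .snd ℝ _ _ -
        crossProduct.flip (ω (k + 1)) ∘ₗ .fst ℝ _ _)
      (crossProduct (connectionCoeff b ω (k + 2)) ∘ₗ .snd ℝ _ _ -
        crossProduct.flip (ω (k + 2)) ∘ₗ .fst ℝ _ _)
  have hcases (j : Fin 3) (hj : j ≠ k) : j = k + 1 ∨ j = k + 2 := by grind
  have hT : Function.Injective T := by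
    refine (injective_iff_map_eq_zero T).2 fun x hx => ?_
    obtain ⟨h₁, h₂⟩ := Prod.ext_iff.1 hx
    refine Prod.ext_iff.2 (h.eq_zero_of_cross_eq_cross fun j hj => ?_)
    obtain rfl | rfl := hcases j hj
    · exact sub_eq_zero.1 h₁
    · exact sub_eq_zero.1 h₂
  obtain ⟨x, hx⟩ := LinearMap.injective_iff_surjective.1 hT (g (k + 1), g (k + 2))
  obtain ⟨h₁, h₂⟩ := Prod.ext_iff.1 hx
  refine ⟨x.1, x.2, fun j hj => ?_⟩
  obtain rfl | rfl := hcases j hj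
  · exact h₁
  · exact h₂

theorem sum_mul_eq_of_skew {c : Fin 3 → Fin 3 → ℝ} (hc : ∀ j k, c j k = -c k j) (v : Fin 3 → ℝ)
    (k : Fin 3) : ∑ j, c j k * v j =
      v (k + 2) * c (k + 1 + 1) (k + 1 + 2) - v (k + 1) * c (k + 2 + 1) (k + 2 + 2) := by
  rw [sum_eq_add_cyclic _ k, self_eq_neg.1 (hc k k), hc (k + 1) k, show k + 1 + 1 = k + 2 by grind,
    show k + 1 + 2 = k by grind, show k + 2 + 1 = k by grind, show k + 2 + 2 = k + 1 by grind]
  ring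

theorem exists_isAdapted_of_nondegenerate {c : Fin 3 → Fin 3 → Fin 3 → ℝ}
    (hc : ∀ i j k, c i j k = -c i k j)
    (hnondeg : ∀ v : Fin 3 → ℝ, v ≠ 0 → ∃ i k, (∑ j, c i j k * v j) ≠ 0) :
    ∃ ω k, IsAdapted (fun n i => c i (n + 1) (n + 2)) ω k := by
  set b : Fin 3 → Fin 3 → ℝ := fun n i => c i (n + 1) (n + 2)
  obtain ⟨k, hk⟩ := exists_cross_ne_zero (b := b) fun v hv => by
    obtain ⟨i, k, hik⟩ := hnondeg v hv
    rw [sum_mul_eq_of_skew (hc i), sub_ne_zero] at hik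
    exact ⟨k, fun h => hik (congr_fun h i)⟩
  obtain ⟨ω, hω⟩ := exists_isAdapted (b := b) hk
  exact ⟨ω, k, hω⟩

end Torsion

section MovingFrame

attribute [local instance] Matrix.normedAddCommGroup Matrix.normedSpace

/-- The topology of the norm, equal to the default one only after unfolding definitions. -/
local instance (priority := high) normTopology : TopologicalSpace (Matrix (Fin 3) (Fin 3) ℝ) :=
  PseudoMetricSpace.toUniformSpace.toTopologicalSpace

/-- A pair `(a, x)` of a matrix and a point of `ℝ³`; the unknown of the differential system is a
family of such pairs. -/
abbrev FramedPoint : Type := Matrix (Fin 3) (Fin 3) ℝ × (Fin 3 → ℝ)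

/-- The bilinear map with `(a', x') ↦ (a, x) ↦ ᵗa x'`. -/
def framedCoord : FramedPoint →L[ℝ] FramedPoint →L[ℝ] Fin 3 → ℝ :=
  ((Matrix.vecMulBilin ℝ ℝ).compl₁₂ (.snd ℝ _ _) (.fst ℝ _ _)).toContinuousBilinearMap

/-- The bilinear map with `(a', x') ↦ (a, x) ↦ ᵗa a'`. -/
def framedGram : FramedPoint →L[ℝ] FramedPoint →L[ℝ] Matrix (Fin 3) (Fin 3) ℝ :=
  ((LinearMap.mul ℝ _).flip.compl₁₂ (.fst ℝ _ _)
    ((Matrix.transposeLinearEquiv _ _ ℝ ℝ).toLinearMap ∘ₗ .fst ℝ _ _)).toContinuousBilinearMap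

theorem framedCoord_apply (P Y : FramedPoint) : framedCoord P Y = P.2 ᵥ* Y.1 := rfl

theorem framedGram_apply (P Y : FramedPoint) : framedGram P Y = Y.1ᵀ * P.1 := rfl

/-- The map `A ↦ A + ᵗA`. -/
def symmetrize : Matrix (Fin 3) (Fin 3) ℝ →ₗ[ℝ] Matrix (Fin 3) (Fin 3) ℝ :=
  .id + (Matrix.transposeLinearEquiv _ _ ℝ ℝ).toLinearMap

theorem symmetrize_apply (A : Matrix (Fin 3) (Fin 3) ℝ) : symmetrize A = A + Aᵀ := rfl

theorem symmetrize_crossMat (v : Fin 3 → ℝ) : symmetrize (crossMat v) = 0 := by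
  rw [symmetrize_apply, crossMat_transpose, add_neg_cancel]

variable {m : ℕ} {y y₀ : (Fin m → ℝ) → FramedPoint} {u p : Fin m → ℝ} {τ : Fin m}
  {S : Finset (Fin m)}

/-- The coefficient of `du^k` in the coframing `ᵗa dx` of a family of framed points. -/
def coframe (y : (Fin m → ℝ) → FramedPoint) (k : Fin m) (u : Fin m → ℝ) : Fin 3 → ℝ :=
  framedCoord (pd k y u) (y u)

theorem analyticAt_coframe (hy : AnalyticAt ℝ y u) (k : Fin m) : AnalyticAt ℝ (coframe y k) u :=
  analyticAt_bilinear_comp framedCoord (analyticAt_pd hy) hy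

theorem dCoeff_coframe (hy : AnalyticAt ℝ y u) (j k : Fin m) :
    dCoeff (coframe y) j k u =
      framedCoord (pd k y u) (pd j y u) - framedCoord (pd j y u) (pd k y u) := by
  have hpd (j k : Fin m) : pd j (coframe y k) u =
      framedCoord (pd k y u) (pd j y u) + framedCoord (pd j (pd k y) u) (y u) :=
    pd_bilinear framedCoord (analyticAt_pd hy).differentiableAt hy.differentiableAt
  rw [dCoeff, hpd, hpd, pd_comm hy j k]
  abel

/-- The first order system in the direction `τ` for `(a, x)` to satisfy `d(ᵗa a) = 0` and
`d(ᵗa dx) = Ω`, the latter only in the coordinate planes spanned by `τ` and an element of `S`. It is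
linear in the `τ`-derivative `P` and in the tangential jet `J`. -/
def framedSystem (hτ : τ ∉ S) :
    FramedPoint →L[ℝ] FramedPoint × ({j : Fin m // j ≠ τ} → FramedPoint) →L[ℝ]
      LinearMap.range symmetrize × (S → Fin 3 → ℝ) :=
  let tangent (J : FramedPoint × ({j : Fin m // j ≠ τ} → FramedPoint)) (j : S) : FramedPoint :=
    J.2 ⟨j, ne_of_mem_of_not_mem j.2 hτ⟩
  (LinearMap.mk₂ ℝ (fun P J => (symmetrize.rangeRestrict (framedGram P J.1),
      fun j => framedCoord P (tangent J j) - framedCoord (tangent J j) P))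
    (fun P P' J => Prod.ext (by simp) (funext fun j => by simp [add_sub_add_comm]))
    (fun c P J => Prod.ext (by simp) (funext fun j => by simp [smul_sub]))
    (fun P J J' => Prod.ext (by simp) (funext fun j => by simp [tangent, add_sub_add_comm]))
    (fun c P J => Prod.ext (by simp) (funext fun j => by
      simp [tangent, smul_sub]))).toContinuousBilinearMap

theorem framedSystem_apply (hτ : τ ∉ S) (P : FramedPoint)
    (J : FramedPoint × ({j : Fin m // j ≠ τ} → FramedPoint)) :
    framedSystem hτ P J = (symmetrize.rangeRestrict (framedGram P J.1), fun j : S =>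
      framedCoord P (J.2 ⟨j, ne_of_mem_of_not_mem j.2 hτ⟩) -
        framedCoord (J.2 ⟨j, ne_of_mem_of_not_mem j.2 hτ⟩) P) := rfl

variable {θ ω : Fin m → Fin 3 → ℝ}

theorem exists_rightInverse_framedSystem (hτ : τ ∉ S)
    (hsolve : ∀ g : Fin m → Fin 3 → ℝ, ∃ α β, ∀ j ∈ S, θ j ⨯₃ β - α ⨯₃ ω j = g j)
    {J : FramedPoint × ({j : Fin m // j ≠ τ} → FramedPoint)} (hJ : J.1.1 = 1)
    (hJS : ∀ j, j.1 ∈ S → J.2 j = (crossMat (θ j), ω j)) :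
    ∃ K : _ →L[ℝ] FramedPoint, ∀ w, framedSystem hτ (K w) J = w := by
  have hsurj : Function.Surjective ((framedSystem hτ).flip J) := by
    rintro ⟨M, g⟩
    obtain ⟨A, rfl⟩ := symmetrize.surjective_rangeRestrict M
    obtain ⟨α, β, hαβ⟩ := hsolve fun j => Function.extend Subtype.val g 0 j + ω j ᵥ* A
    refine ⟨(A + crossMat α, β), ?_⟩
    rw [ContinuousLinearMap.flip_apply, framedSystem_apply]
    refine Prod.ext (Subtype.ext ?_) (funext fun j => ?_)
    · simp [framedGram_apply, hJ, symmetrize_crossMat]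
    · have hj := hαβ j j.2
      rw [Subtype.val_injective.extend_apply, ← sub_eq_iff_eq_add] at hj
      have hJj := hJS ⟨j, ne_of_mem_of_not_mem j.2 hτ⟩ j.2
      simp only [hJj, framedCoord_apply, vecMul_add, vecMul_crossMat, ← hj]
      abel
  obtain ⟨K, hK⟩ := LinearMap.exists_rightInverse_of_surjective
    ((framedSystem hτ).flip J).toLinearMap (LinearMap.range_eq_top.2 hsurj)
  exact ⟨K.toContinuousLinearMap, LinearMap.congr_fun hK⟩

/-- Near `p`, `a` is orthogonal, and the coframing `ᵗa dx` has derived 2-form `Ω` as far as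
the coordinate planes spanned by directions in `S` are concerned; the derivatives of `(a, x)` at `p`
in these directions are prescribed by `θ` and `ω`. -/
structure IsPartialSolution (Ω : Fin m → Fin m → (Fin m → ℝ) → Fin 3 → ℝ)
    (θ ω : Fin m → Fin 3 → ℝ) (p : Fin m → ℝ) (S : Finset (Fin m))
    (y : (Fin m → ℝ) → FramedPoint) : Prop where
  analyticAt : AnalyticAt ℝ y p
  fst_apply : (y p).1 = 1
  orthogonal : ∀ᶠ u in 𝓝 p, framedGram (y u) (y u) = 1
  pd_eq : ∀ j ∈ S, pd j y p = (crossMat (θ j), ω j)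
  dCoeff_eq : ∀ j ∈ S, ∀ k ∈ S, ∀ᶠ u in 𝓝 p, dCoeff (coframe y) j k u = Ω j k u

theorem isPartialSolution_const (Ω : Fin m → Fin m → (Fin m → ℝ) → Fin 3 → ℝ)
    (θ ω : Fin m → Fin 3 → ℝ) (p : Fin m → ℝ) :
    IsPartialSolution Ω θ ω p ∅ fun _ => (1, 0) where
  analyticAt := analyticAt_const
  fst_apply := rfl
  orthogonal := .of_forall fun _ => by simp [framedGram_apply]
  pd_eq := by simp
  dCoeff_eq := by simp

theorem eventually_framedGram_eq_one (hy : AnalyticAt ℝ y p)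
    (hp : ∀ᶠ u in 𝓝 p, u τ = p τ → framedGram (y u) (y u) = 1)
    (h : ∀ᶠ u in 𝓝 p, symmetrize (framedGram (pd τ y u) (y u)) = 0) :
    ∀ᶠ u in 𝓝 p, framedGram (y u) (y u) = 1 := by
  refine eventuallyEq_of_pd_eq (analyticAt_bilinear_comp framedGram hy hy) analyticAt_const hp ?_
  filter_upwards [h, hy.eventually_analyticAt] with u hu hyu
  refine (pd_bilinear framedGram hyu.differentiableAt hyu.differentiableAt).trans ?_
  rw [symmetrize_apply, framedGram_apply, transpose_mul, transpose_transpose] at hu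
  rw [framedGram_apply, framedGram_apply, add_comm, hu]
  simp [pd]

theorem eventually_pd_eq_of_eq_on_hyperplane (hy : AnalyticAt ℝ y p) (hy₀ : AnalyticAt ℝ y₀ p)
    (h : ∀ᶠ u in 𝓝 p, u τ = p τ → y u = y₀ u) {j : Fin m} (hj : j ≠ τ) :
    ∀ᶠ u in 𝓝 p, u τ = p τ → pd j y u = pd j y₀ u := by
  filter_upwards [h.eventually_nhds, hy.eventually_analyticAt, hy₀.eventually_analyticAt]
    with u hu hyu hy₀u huτ
  exact pd_eq_of_eq_on_hyperplane hyu.differentiableAt hy₀u.differentiableAt hj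
    (hu.mono fun v hv hvu => hv (hvu.trans huτ))

namespace IsPartialSolution

variable {Ω : Fin m → Fin m → (Fin m → ℝ) → Fin 3 → ℝ}

theorem exists_framedSystem_solution (h : IsPartialSolution Ω θ ω p S y₀) (hτ : τ ∉ S)
    (hsolve : ∀ g : Fin m → Fin 3 → ℝ, ∃ α β, ∀ j ∈ S, θ j ⨯₃ β - α ⨯₃ ω j = g j)
    (hΩ : ∀ j, AnalyticAt ℝ (Ω j τ) p) (hp : ∀ j, θ j ⨯₃ ω τ - θ τ ⨯₃ ω j = Ω j τ p) :
    ∃ y, AnalyticAt ℝ y p ∧ (∀ᶠ u in 𝓝 p, u τ = p τ → y u = y₀ u) ∧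
      pd τ y p = (crossMat (θ τ), ω τ) ∧
      (∀ᶠ u in 𝓝 p, symmetrize (framedGram (pd τ y u) (y u)) = 0) ∧
      ∀ j ∈ S, ∀ᶠ u in 𝓝 p, dCoeff (coframe y) j τ u = Ω j τ u := by
  have := (LinearMap.range symmetrize).closed_of_finiteDimensional.completeSpace_coe
  have hjet (j : {j : Fin m // j ≠ τ}) (hj : j.1 ∈ S) :
      (tangentialJet τ y₀ p).2 j = (crossMat (θ j), ω j) := h.pd_eq j hj
  obtain ⟨K, hK⟩ := exists_rightInverse_framedSystem hτ hsolve h.fst_apply hjet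
  have hrhs : AnalyticAt ℝ (fun u => ((0 : LinearMap.range symmetrize), fun j : S => Ω j τ u)) p :=
    analyticAt_const.prod (analyticAt_pi_iff.2 fun j => hΩ j)
  have hP₀ : framedSystem hτ (crossMat (θ τ), ω τ) (tangentialJet τ y₀ p) =
      (0, fun j : S => Ω j τ p) := by
    refine Prod.ext (Subtype.ext ?_) (funext fun j => ?_)
    · simp [framedSystem_apply, framedGram_apply, tangentialJet, h.fst_apply, symmetrize_crossMat]
    · have hj := hjet ⟨j, ne_of_mem_of_not_mem j.2 hτ⟩ j.2
      simp only [framedSystem_apply, hj, framedCoord_apply, vecMul_crossMat, hp]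
  obtain ⟨y, hy, hy₀, hyp, hsys⟩ := exists_analyticAt_cauchy_solution h.analyticAt hrhs _ hK hP₀
  refine ⟨y, hy, hy₀, hyp, hsys.mono fun u hu => congr_arg (fun w => w.1.1) hu, fun j hj => ?_⟩
  filter_upwards [hsys, hy.eventually_analyticAt] with u hu hyu
  rw [dCoeff_coframe hyu]
  exact congr_fun (congr_arg Prod.snd hu) ⟨j, hj⟩

theorem dCoeff_eq_of_eq_on_hyperplane (h : IsPartialSolution Ω θ ω p S y₀)
    (hΩ : IsClosedTwoForm Ω p) (hτ : τ ∉ S) (hy : AnalyticAt ℝ y p)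
    (hy₀ : ∀ᶠ u in 𝓝 p, u τ = p τ → y u = y₀ u)
    (hd : ∀ j ∈ S, ∀ᶠ u in 𝓝 p, dCoeff (coframe y) j τ u = Ω j τ u) {j k : Fin m} (hj : j ∈ S)
    (hk : k ∈ S) : ∀ᶠ u in 𝓝 p, dCoeff (coframe y) j k u = Ω j k u := by
  have hdτj : ∀ᶠ u in 𝓝 p, dCoeff (coframe y) τ j u = Ω τ j u := by
    filter_upwards [hd j hj, hΩ.skew τ j] with u hu hskew
    rw [hskew, ← hu, dCoeff_swap]
  have hpd {i : Fin m} (hi : i ∈ S) :=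
    eventually_pd_eq_of_eq_on_hyperplane hy h.analyticAt hy₀ (ne_of_mem_of_not_mem hi hτ)
  refine (isClosedTwoForm_dCoeff (analyticAt_coframe hy)).eventuallyEq hΩ hdτj (hd k hk) ?_
  filter_upwards [hpd hj, hpd hk, h.dCoeff_eq j hj k hk, hy.eventually_analyticAt,
    h.analyticAt.eventually_analyticAt] with u hju hku hu hyu hy₀u huτ
  rw [dCoeff_coframe hyu, hju huτ, hku huτ, ← dCoeff_coframe hy₀u, hu]

theorem exists_insert (h : IsPartialSolution Ω θ ω p S y₀) (hτ : τ ∉ S)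
    (hsolve : ∀ g : Fin m → Fin 3 → ℝ, ∃ α β, ∀ j ∈ S, θ j ⨯₃ β - α ⨯₃ ω j = g j)
    (hΩ : IsClosedTwoForm Ω p) (hp : ∀ j, θ j ⨯₃ ω τ - θ τ ⨯₃ ω j = Ω j τ p) :
    ∃ y, IsPartialSolution Ω θ ω p (insert τ S) y := by
  obtain ⟨y, hy, hy₀, hyp, hgram, hd⟩ :=
    h.exists_framedSystem_solution hτ hsolve (hΩ.analyticAt · τ) hp
  have hpd {j : Fin m} (hj : j ∈ S) := (eventually_pd_eq_of_eq_on_hyperplane hy h.analyticAt hy₀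
    (ne_of_mem_of_not_mem hj hτ)).self_of_nhds rfl
  have hcyl {j : Fin m} (hj : j ∈ insert τ S) :
      ∀ᶠ u in 𝓝 p, dCoeff (coframe y) j τ u = Ω j τ u := by
    obtain rfl | hj := Finset.mem_insert.1 hj
    · exact (hΩ.skew j j).mono fun u hu => by rw [dCoeff_self, self_eq_neg.1 hu]
    · exact hd j hj
  refine ⟨y, hy, ?_, ?_, ?_, fun j hj k hk => ?_⟩
  · rw [hy₀.self_of_nhds rfl, h.fst_apply]
  · refine eventually_framedGram_eq_one hy ?_ hgram
    filter_upwards [hy₀, h.orthogonal] with u hu horth huτ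
    rw [hu huτ, horth]
  · exact (Finset.forall_mem_insert _ _ _).2 ⟨hyp, fun j hj => (hpd hj).trans (h.pd_eq j hj)⟩
  · obtain rfl | hkS := Finset.mem_insert.1 hk
    · exact hcyl hj
    obtain rfl | hjS := Finset.mem_insert.1 hj
    · filter_upwards [hcyl hk, hΩ.skew j k] with u hu hskew
      rw [hskew, ← hu, dCoeff_swap]
    · exact h.dCoeff_eq_of_eq_on_hyperplane hΩ hτ hy hy₀ hd hjS hkS

end IsPartialSolution

theorem exists_isPartialSolution_univ {Ω : Fin 3 → Fin 3 → (Fin 3 → ℝ) → Fin 3 → ℝ}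
    {p : Fin 3 → ℝ} (hΩ : IsClosedTwoForm Ω p) {ω : Fin 3 → Fin 3 → ℝ} {k : Fin 3}
    (h : IsAdapted (fun n => Ω (n + 1) (n + 2) p) ω k) :
    ∃ θ y, IsPartialSolution Ω θ ω p Finset.univ y := by
  set θ := connectionCoeff (fun n => Ω (n + 1) (n + 2) p) ω
  have hp (i j : Fin 3) : θ i ⨯₃ ω j - θ j ⨯₃ ω i = Ω i j p := by
    have hcyc (n : Fin 3) := connectionCoeff_cross_sub (b := fun n => Ω (n + 1) (n + 2) p)
      h.det_ne_zero n
    have hcases : ∀ i j : Fin 3, i = j ∨ (∃ n, i = n + 1 ∧ j = n + 2) ∨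
        ∃ n, i = n + 2 ∧ j = n + 1 := by decide
    obtain rfl | ⟨n, rfl, rfl⟩ | ⟨n, rfl, rfl⟩ := hcases i j
    · rw [sub_self, self_eq_neg.1 (hΩ.skew i i).self_of_nhds]
    · exact hcyc n
    · rw [(hΩ.skew _ _).self_of_nhds, ← hcyc n, neg_sub]
  have step {S : Finset (Fin 3)} {τ : Fin 3} (hk : k ∉ S) (hτ : τ ∉ S)
      (hS : ∃ y, IsPartialSolution Ω θ ω p S y) :
      ∃ y, IsPartialSolution Ω θ ω p (insert τ S) y := by
    obtain ⟨y, hy⟩ := hS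
    refine hy.exists_insert hτ (fun g => ?_) hΩ (hp · τ)
    obtain ⟨α, β, hαβ⟩ := h.exists_cross_sub_cross_eq g
    exact ⟨α, β, fun j hj => hαβ j (ne_of_mem_of_not_mem hj hk)⟩
  have huniv : insert k (insert (k + 2) (insert (k + 1) ∅)) = (Finset.univ : Finset (Fin 3)) := by
    ext j; grind
  rw [← huniv]
  exact ⟨θ, step (by simp) (by simp) <| step (by simp) (by simp) <|
    step (by simp) (by simp) ⟨_, isPartialSolution_const Ω θ ω p⟩⟩

theorem coframe_apply_eq_Wmat {y : (Fin 3 → ℝ) → FramedPoint} {u : Fin 3 → ℝ}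
    (hy : DifferentiableAt ℝ y u) (horth : framedGram (y u) (y u) = 1) (i k : Fin 3) :
    coframe y k u i = Wmat (fun v => (y v).1) (fun v => (y v).2) u i k := by
  have hsnd : pd k (fun v => (y v).2) u = (pd k y u).2 :=
    pd_clm (.snd ℝ (Matrix (Fin 3) (Fin 3) ℝ) (Fin 3 → ℝ)) hy
  rw [Wmat, Matrix.inv_eq_left_inv horth, coframe, framedCoord_apply, ← hsnd, ← mulVec_transpose]
  rfl

namespace IsPartialSolution

variable {Ω : Fin 3 → Fin 3 → (Fin 3 → ℝ) → Fin 3 → ℝ} {θ ω : Fin 3 → Fin 3 → ℝ}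
  {p : Fin 3 → ℝ} {y : (Fin 3 → ℝ) → FramedPoint}

theorem eventually_mem_SO3 {S : Finset (Fin 3)} (h : IsPartialSolution Ω θ ω p S y) :
    ∀ᶠ u in 𝓝 p, (y u).1 ∈ SO3 := by
  have hcont : ContinuousAt (fun u => (y u).1.det) p :=
    continuous_id.matrix_det.continuousAt.comp h.analyticAt.continuousAt.fst
  have hpos : ∀ᶠ u in 𝓝 p, 0 < (y u).1.det :=
    hcont.eventually_const_lt (by simp [h.fst_apply])
  filter_upwards [h.orthogonal, hpos] with u horth hdet
  have hsq : (y u).1.det * (y u).1.det = 1 := by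
    simpa [framedGram_apply] using congr_arg det horth
  exact ⟨horth, by nlinarith⟩

theorem eventually_isUnit_det_jacobian (h : IsPartialSolution Ω θ ω p Finset.univ y)
    (hω : (Matrix.of ω).det ≠ 0) :
    ∀ᶠ u in 𝓝 p, IsUnit (jacobian (fun v => (y v).2) u).det := by
  have hx : AnalyticAt ℝ (fun v => (y v).2) p := analyticAt_snd.fun_comp h.analyticAt
  have hcont : ContinuousAt (fun u => (jacobian (fun v => (y v).2) u).det) p := by
    refine continuous_id.matrix_det.continuousAt.comp
      (continuousAt_pi.2 fun i => continuousAt_pi.2 fun j => ?_)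
    exact (continuous_apply i).continuousAt.comp (analyticAt_pd hx).continuousAt
  have hp : jacobian (fun v => (y v).2) p = (Matrix.of ω)ᵀ := by
    ext i j
    have hpd : pd j (fun v => (y v).2) p = (pd j y p).2 :=
      pd_clm (.snd ℝ (Matrix (Fin 3) (Fin 3) ℝ) (Fin 3 → ℝ)) h.analyticAt.differentiableAt
    rw [jacobian, of_apply, hpd, h.pd_eq j (Finset.mem_univ j)]
    rfl
  filter_upwards [hcont.eventually_ne (by rwa [hp, det_transpose])] with u hu
  exact hu.isUnit

theorem eventually_pd_Wmat_sub (h : IsPartialSolution Ω θ ω p Finset.univ y) (i j k : Fin 3) :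
    ∀ᶠ u in 𝓝 p, pd j (fun v => Wmat (fun v => (y v).1) (fun v => (y v).2) v i k) u -
      pd k (fun v => Wmat (fun v => (y v).1) (fun v => (y v).2) v i j) u = Ω j k u i := by
  have hW : ∀ᶠ u in 𝓝 p, ∀ k, coframe y k u i =
      Wmat (fun v => (y v).1) (fun v => (y v).2) u i k := by
    filter_upwards [h.orthogonal, h.analyticAt.eventually_analyticAt] with u horth hyu
    exact coframe_apply_eq_Wmat hyu.differentiableAt horth i
  filter_upwards [hW.eventually_nhds, h.analyticAt.eventually_analyticAt,
    h.dCoeff_eq j (Finset.mem_univ j) k (Finset.mem_univ k)] with u hu hyu hd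
  have hpd (j k : Fin 3) : pd j (fun v => Wmat (fun v => (y v).1) (fun v => (y v).2) v i k) u =
      pd j (coframe y k) u i :=
    (pd_congr (hu.mono fun v hv => (hv k).symm)).trans <|
      pd_clm (.proj i) (analyticAt_coframe hyu k).differentiableAt
  rw [hpd, hpd, ← hd]
  rfl

end IsPartialSolution

theorem exists_flat_coframing {Ω : Fin 3 → Fin 3 → (Fin 3 → ℝ) → Fin 3 → ℝ} {p : Fin 3 → ℝ}
    (hΩ : IsClosedTwoForm Ω p) {ω : Fin 3 → Fin 3 → ℝ} {k : Fin 3}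
    (h : IsAdapted (fun n => Ω (n + 1) (n + 2) p) ω k) :
    ∃ (x : (Fin 3 → ℝ) → Fin 3 → ℝ) (a : (Fin 3 → ℝ) → Matrix (Fin 3) (Fin 3) ℝ),
      AnalyticAt ℝ x p ∧ (∀ i k, AnalyticAt ℝ (fun u => a u i k) p) ∧
      ∀ᶠ u in 𝓝 p, IsUnit (jacobian x u).det ∧ a u ∈ SO3 ∧
        ∀ i j k, pd j (fun v => Wmat a x v i k) u - pd k (fun v => Wmat a x v i j) u =
          Ω j k u i := by
  obtain ⟨θ, y, hy⟩ := exists_isPartialSolution_univ hΩ h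
  refine ⟨fun u => (y u).2, fun u => (y u).1, analyticAt_snd.fun_comp hy.analyticAt,
    fun i k => ?_, ?_⟩
  · exact (Matrix.entryLinearMap ℝ ℝ i k).toContinuousLinearMap.analyticAt _ |>.fun_comp
      (analyticAt_fst.fun_comp hy.analyticAt)
  · filter_upwards [hy.eventually_isUnit_det_jacobian h.det_ne_zero, hy.eventually_mem_SO3,
      eventually_all.2 fun i => eventually_all.2 fun j => eventually_all.2
        (hy.eventually_pd_Wmat_sub i j)] with u hjac hSO3 hW
    exact ⟨hjac, hSO3, hW⟩

end MovingFrame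

end

/-- local existence of a real-analytic coframing ω with dω = Ω and flat
metric g = ᵗω∘ω, near a point p where Ω is nondegenerate (Theorem 3.1 of the paper). -/
theorem flat_metric_with_prescribed_derived_coframing_nondegenerate
    (M : Set (Fin 3 → ℝ)) (hM : IsOpen M) (p : Fin 3 → ℝ) (hp : p ∈ M)
    (Ω : Fin 3 → Fin 3 → Fin 3 → (Fin 3 → ℝ) → ℝ)
    (hanal : ∀ i j k : Fin 3, AnalyticOnNhd ℝ (Ω i j k) M)
    (hskew : ∀ i j k : Fin 3, ∀ u ∈ M, Ω i j k u = -Ω i k j u)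
    (hclosed : ∀ i : Fin 3, ∀ u ∈ M,
      pd 0 (Ω i 1 2) u + pd 1 (Ω i 2 0) u + pd 2 (Ω i 0 1) u = 0)
    (hnondeg : ∀ v : Fin 3 → ℝ, v ≠ 0 → ∃ i k : Fin 3, (∑ j, Ω i j k p * v j) ≠ 0) :
    ∃ U : Set (Fin 3 → ℝ), IsOpen U ∧ p ∈ U ∧ U ⊆ M ∧
      ∃ (x : (Fin 3 → ℝ) → (Fin 3 → ℝ)) (a : (Fin 3 → ℝ) → Matrix (Fin 3) (Fin 3) ℝ),
        AnalyticOnNhd ℝ x U ∧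
        (∀ u ∈ U, IsUnit (jacobian x u).det) ∧
        (∀ i k : Fin 3, AnalyticOnNhd ℝ (fun u => a u i k) U) ∧
        (∀ u ∈ U, a u ∈ SO3) ∧
        (∀ i j k : Fin 3, ∀ u ∈ U,
          pd j (fun v => Wmat a x v i k) u - pd k (fun v => Wmat a x v i j) u
            = Ω i j k u) := by
  have hMp : ∀ᶠ u in 𝓝 p, u ∈ M := hM.mem_nhds hp
  have hΩ : IsClosedTwoForm (fun j k u i => Ω i j k u) p :=
    isClosedTwoForm_pi fun i => isClosedTwoForm_of_cyclic (fun j k => hanal i j k p hp)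
      (fun j k => hMp.mono (hskew i j k)) (hMp.mono (hclosed i))
  obtain ⟨ω, k, hω⟩ := exists_isAdapted_of_nondegenerate (fun i j k => hskew i j k p hp) hnondeg
  obtain ⟨x, a, hx, ha, h⟩ := exists_flat_coframing hΩ hω
  have ha' : ∀ᶠ u in 𝓝 p, ∀ i k, AnalyticAt ℝ (fun u => a u i k) u :=
    eventually_all.2 fun i => eventually_all.2 fun k => (ha i k).eventually_analyticAt
  obtain ⟨U, hU, hUo, hpU⟩ := eventually_nhds_iff.1 <|
    hMp.and <| hx.eventually_analyticAt.and <| ha'.and h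
  exact ⟨U, hUo, hpU, fun u hu => (hU u hu).1, x, a, fun u hu => (hU u hu).2.1,
    fun u hu => (hU u hu).2.2.2.1, fun i k u hu => (hU u hu).2.2.1 i k,
    fun u hu => (hU u hu).2.2.2.2.1, fun i j k u hu => (hU u hu).2.2.2.2.2 i j k⟩
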